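/- arXiv:1506.04011 — 2 statements merged into one kernel-verified Lean document; each statement's English description precedes it below -/
import Mathlib

section
/- Let p be an odd prime and (E,†) a finite-dimensional semisimple ℚ_p-algebra with involution such that E is split and the center of E is a product of unramified extensions of ℚ_p. Let R ⊂ E be a †-stable maximal order, and let d = dim_{ℚ_p} E. Then for every q ∈ R: if there exists a ∈ E with a†·q·a ∈ ℚ_p^×, then there exists b ∈ R such that b†·q·b ∈ ℤ_p \ {0} and |det(L_q)|_p^{2d−1} ≤ |det(L_b)|_p². (With the local norm Nm(x) = |det(L_x)|_p^{−1} of rank d, this expresses Nm(b) ≤ Nm(q)^{d−1/2}, i.e. the local bound holds with constant 1 at such primes.) -/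
/-!
Write `δ = det L_q` and `d = dim E`. The hypothesis makes `a` invertible and `δ` nonzero, and
the adjugate of `L_q` gives `q w = δ` with `w ∈ R`. If `b† q b = n` is a scalar, then
`(det L_b)² δ = n ^ d`, because `det L` is multiplicative and invariant under `†`
(`det_mulLeft_eq_det_mulRight`). So the bound amounts to `|δ|^{2d} ≤ |n|^d`, and it suffices to find
`b ∈ R` with `n ∈ ℤ_p` and `|δ|² ≤ |n|`.

Multiply `a` by a power `s` of `p` such that `n = s² m` has `|n| = |δ|` or `|n| = |δ| / p`
(`exists_zpow_norm_mul_sq`). The element `x = s a†` satisfies `x† x = (n / δ) w ∈ R`. A `p`-adic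
reduction argument (`exists_isometry_mul_mem`) yields `u` with `u† u = u u† = 1` and `u x ∈ R`; then
`b = (u x)†` lies in `R` and `b† q b = n`. This suffices unless `δ` is a unit and `|n| = 1 / p`. In that
case `q` is a unit of `R`, and a similitude of factor `p` (`exists_unit_similitude`) replaces `n`
by the unit `n / p`.

Both steps rest on `exists_hyperbolic_idempotent`: an element of `R` which is isotropic modulo a power
of `p` generates modulo `p` the same right ideal as an honest idempotent `e` of `R` with
`e† e = e e† = 0`. This uses that `p` is odd and that `R / pR` is von Neumann regular. The regularity
(`order_regular_mod_p`) comes from the hypotheses on `E` and the maximality of `R`: `E` is the commutant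
of a finite group `G` of order prime to `p`, made of roots of unity, acting on the space `V` of column
vectors (`exists_finite_commutant`); a maximal order is the full stabilizer of a lattice in `V` that is
also `G`-stable (`mem_of_preserves_lattice`); and regularity passes from the matrix algebra over
`ℤ / p` to `R / pR` by averaging over `G`.
-/

/-- `dag` is an involution of the `ℚ_p`-algebra `E`. -/
def IsInvolutionQp (p : ℕ) [Fact p.Prime] (E : Type*) [Ring E] [Algebra ℚ_[p] E]
    (dag : E → E) : Prop :=
  (∀ x y : E, dag (x + y) = dag x + dag y) ∧
  (∀ x y : E, dag (x * y) = dag y * dag x) ∧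
  (∀ x : E, dag (dag x) = x) ∧
  (∀ r : ℚ_[p], dag (algebraMap ℚ_[p] E r) = algebraMap ℚ_[p] E r)

/-- Witness that the `ℚ_p`-algebra `E` is split (a finite product of matrix algebras
over fields) with centre a product of unramified extensions of `ℚ_p` (every finite
unramified extension of `ℚ_p` is generated by a root of unity of order prime to `p`). -/
structure UnramifiedSplitting (p : ℕ) [Fact p.Prime] (E : Type*) [Ring E]
    [Algebra ℚ_[p] E] where
  n : ℕ
  K : Fin n → Type
  [fieldK : ∀ i, Field (K i)]
  [algK : ∀ i, Algebra ℚ_[p] (K i)]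
  finK : ∀ i, FiniteDimensional ℚ_[p] (K i)
  unramK : ∀ i, ∃ (m : ℕ) (x : K i), 0 < m ∧ ¬ p ∣ m ∧ IsPrimitiveRoot x m ∧
    Algebra.adjoin ℚ_[p] {x} = ⊤
  d : Fin n → ℕ
  dpos : ∀ i, 0 < d i
  equiv : E ≃ₐ[ℚ_[p]] ∀ i, Matrix (Fin (d i)) (Fin (d i)) (K i)

/-- `R` is an order in the finite-dimensional `ℚ_p`-algebra `E`. -/
def IsOrderZp (p : ℕ) [Fact p.Prime] (E : Type*) [Ring E] [Algebra ℚ_[p] E]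
    [Algebra ℤ_[p] E] [IsScalarTower ℤ_[p] ℚ_[p] E] (R : Subalgebra ℤ_[p] E) : Prop :=
  (Subalgebra.toSubmodule R).FG ∧ Submodule.span ℚ_[p] (R : Set E) = ⊤

/-! ### Tripotents and hyperbolic idempotents in `p`-adically complete rings with involution -/

section AdicRing
universe u
variable {A : Type u} [Ring A]

theorem natCast_pow_dvd_mul_left (p k : ℕ) {x : A} (a : A) (h : (p : A) ^ k ∣ x) :
    (p : A) ^ k ∣ a * x := by
  obtain ⟨w, rfl⟩ := h
  exact ⟨a * w, by rw [← mul_assoc, ← mul_assoc, ((Nat.cast_commute p a).pow_left k).eq]⟩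

/-- `p ^ k A` is a two-sided ideal, so divisibility by `p ^ k` can be tested in a quotient ring,
where computations modulo `p ^ k` become equalities. -/
theorem natCast_pow_dvd_iff_mk (p k : ℕ) :
    ∃ (B : Type u) (_ : Ring B) (π : A →+* B), ∀ x : A, (p : A) ^ k ∣ x ↔ π x = 0 := by
  let I : Ideal A :=
    { carrier := {x | (p : A) ^ k ∣ x}
      add_mem' := fun ha hb => dvd_add ha hb
      zero_mem' := dvd_zero _
      smul_mem' := fun c x hx => natCast_pow_dvd_mul_left p k c hx }
  have : I.IsTwoSided := ⟨fun b h => Dvd.dvd.mul_right h b⟩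
  exact ⟨A ⧸ I, inferInstance, Ideal.Quotient.mk I, fun x => (Ideal.Quotient.eq_zero_iff_mem (I := I)).symm⟩

/-- For commuting `a ≡ b` modulo `p`, one has `a ^ (p ^ n) ≡ b ^ (p ^ n)` modulo `p ^ (n + 1)`:
each `p`-th power gains a factor `p`, since `∑ a ^ i b ^ (p - 1 - i) ≡ p b ^ (p - 1)`. -/
theorem natCast_pow_dvd_pow_sub_pow {p : ℕ} {a b : A} (hab : Commute a b)
    (h : (p : A) ∣ a - b) (n : ℕ) : (p : A) ^ (n + 1) ∣ a ^ p ^ n - b ^ p ^ n := by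
  induction n with
  | zero => simpa using h
  | succ n ih =>
    obtain ⟨B, _, π, hπ⟩ := natCast_pow_dvd_iff_mk (A := A) p 1
    set a' := a ^ p ^ n
    set b' := b ^ p ^ n
    have hc : Commute a' b' := hab.pow_pow _ _
    have h1 : π a' = π b' := by
      rw [← sub_eq_zero, ← map_sub, ← hπ]
      exact (pow_dvd_pow _ (by omega)).trans ih
    have hp : (p : B) = 0 := by
      have := (hπ (p : A)).1 (by simp)
      simpa using this
    have h2 : (p : A) ^ 1 ∣ ∑ i ∈ Finset.range p, a' ^ i * b' ^ (p - 1 - i) := by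
      rw [hπ, map_sum]
      have : ∀ i ∈ Finset.range p, π (a' ^ i * b' ^ (p - 1 - i)) = π b' ^ (p - 1) := by
        intro i hi
        have := Finset.mem_range.1 hi
        rw [map_mul, map_pow π a', map_pow π b', h1, ← pow_add]
        congr 1
        omega
      rw [Finset.sum_congr rfl this, Finset.sum_const, Finset.card_range, nsmul_eq_mul, hp, zero_mul]
    have h3 := hc.mul_geom_sum₂ p
    rw [pow_succ p n, pow_mul, pow_mul, ← h3]
    obtain ⟨w, hw⟩ := ih
    rw [hw, mul_assoc, pow_succ _ (n + 1)]
    obtain ⟨v, hv⟩ := natCast_pow_dvd_mul_left p 1 w h2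
    rw [hv, pow_one]
    exact ⟨v, by rw [mul_assoc]⟩

theorem tripotent_pow_odd {B : Type*} [Ring B] {t : B} (h : t * t * t = t) (k : ℕ) :
    t ^ (2 * k + 1) = t := by
  induction k with
  | zero => simp
  | succ k ih =>
    rw [show 2 * (k + 1) + 1 = (2 * k + 1) + 2 by ring, pow_add, ih, pow_two, ← mul_assoc, h]

/-- `A` is `p`-adically separated and complete. -/
structure PComplete (p : ℕ) (A : Type*) [Ring A] : Prop where
  sep : ∀ x : A, (∀ n : ℕ, (p : A) ^ n ∣ x) → x = 0
  complete : ∀ x : ℕ → A, (∀ n, (p : A) ^ (n + 1) ∣ x (n + 1) - x n) →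
    ∃ l : A, ∀ n, (p : A) ^ (n + 1) ∣ l - x n

variable [StarRing A]

theorem natCast_pow_dvd_star {p k : ℕ} {x : A} (h : (p : A) ^ k ∣ x) : (p : A) ^ k ∣ star x := by
  obtain ⟨w, rfl⟩ := h
  refine ⟨star w, ?_⟩
  rw [star_mul, star_pow, star_natCast, ((Nat.cast_commute p (star w)).pow_left k).eq]

/-- A skew element `t` with `t³ ≡ t` modulo `p ^ j` is congruent modulo `p ^ j` to a skew element
`τ` with `τ³ = τ`, namely the limit of `t ^ (p ^ n)`. Skewness survives because `p` is odd. -/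
theorem exists_skew_tripotent {p : ℕ} (hp : Odd p) (hA : PComplete p A) {t : A}
    (ht : star t = -t) {j : ℕ} (hj : 0 < j) (h3 : (p : A) ^ j ∣ t * t * t - t) :
    ∃ τ : A, τ * τ * τ = τ ∧ star τ = -τ ∧ (p : A) ^ j ∣ τ - t := by
  obtain ⟨k, rfl⟩ : ∃ k, p = 2 * k + 1 := hp
  set p := 2 * k + 1 with hpdef
  have hcomm : Commute (t * t * t) t := ((Commute.refl t).mul_left (Commute.refl t)).mul_left (Commute.refl t)
  have hodd : ∀ n, Odd (p ^ n) := fun n => Odd.pow ⟨k, hpdef⟩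
  have key : ∀ i, (p : A) ^ i ∣ t * t * t - t → ∀ n, (p : A) ^ i ∣ t ^ p ^ n - t := by
    intro i hi n
    obtain ⟨B, _, π, hπ⟩ := natCast_pow_dvd_iff_mk (A := A) p i
    rw [hπ] at hi ⊢
    simp only [map_sub, map_mul, map_pow, sub_eq_zero] at hi ⊢
    obtain ⟨l, hl⟩ := hodd n
    rw [hl]
    exact tripotent_pow_odd hi l
  have h31 : (p : A) ∣ t * t * t - t := (dvd_pow_self _ hj.ne').trans h3
  have hskew : ∀ n, star (t ^ p ^ n) = - t ^ p ^ n := by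
    intro n; rw [star_pow, ht, (hodd n).neg_pow]
  obtain ⟨τ, hτ⟩ := hA.complete (fun n => t ^ p ^ n) (by
    intro n
    simp only [pow_succ' p n, pow_mul]
    refine natCast_pow_dvd_pow_sub_pow ((Commute.refl t).pow_left p) ?_ n
    have := key 1 (by simpa using h31) 1
    simpa using this)
  refine ⟨τ, ?_, ?_, ?_⟩
  · rw [← sub_eq_zero]
    refine hA.sep _ fun n => (pow_dvd_pow _ (Nat.le_succ n)).trans ?_
    have h1 := hτ n
    have h2 := natCast_pow_dvd_pow_sub_pow hcomm h31 n
    obtain ⟨B, _, π, hπ⟩ := natCast_pow_dvd_iff_mk (A := A) p (n + 1)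
    rw [hπ] at h1 h2 ⊢
    have h4 : (t * t * t) ^ p ^ n = t ^ p ^ n * t ^ p ^ n * t ^ p ^ n := by
      rw [((Commute.refl t).mul_left (Commute.refl t)).mul_pow, (Commute.refl t).mul_pow]
    rw [h4] at h2
    simp only [map_sub, map_mul, sub_eq_zero] at h1 h2 ⊢
    rw [h1, h2]
  · rw [← sub_eq_zero, sub_neg_eq_add]
    refine hA.sep _ fun n => (pow_dvd_pow _ (Nat.le_succ n)).trans ?_
    have h1 := hτ n
    have h2 := natCast_pow_dvd_star h1
    have : star τ + τ = star (τ - t ^ p ^ n) + (τ - t ^ p ^ n) := by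
      rw [star_sub, hskew]; abel
    rw [this]
    exact dvd_add h2 h1
  · have h1 := (pow_dvd_pow (p : A) (Nat.le_succ j)).trans (hτ j)
    have := dvd_add h1 (key j h3 j)
    simpa using this

/-- Lifting of isotropic right ideals. If `y† y ≡ 0` modulo `p ^ j` and `A / pA` is von Neumann
regular, there is an idempotent `e` with `e† e = e e† = 0` such that `e ∈ yA + p ^ j A` and
`y ∈ eA + pA`. Regularity gives an idempotent `f` modulo `p ^ j` with `fA ≡ yA` modulo `p`; then
`f - f†` is skew and tripotent modulo `p ^ j`, and if `τ` is the tripotent lifting it, the element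
`e = (τ² + τ) / 2` works, its adjoint being `(τ² - τ) / 2`. -/
theorem exists_hyperbolic_idempotent {p : ℕ} (hp : Odd p) (hA : PComplete p A)
    {h : A} (h2 : 2 * h = 1) (hc : ∀ x : A, Commute h x)
    (hreg : ∀ y : A, ∃ z : A, (p : A) ∣ y * z * y - y) {y : A} {j : ℕ} (hj : 0 < j)
    (hy : (p : A) ^ j ∣ star y * y) :
    ∃ e : A, e * e = e ∧ star e * e = 0 ∧ e * star e = 0 ∧
      (∃ r : A, (p : A) ^ j ∣ e - y * r) ∧ ∃ r : A, (p : A) ∣ y - e * r := by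
  obtain ⟨z, hz⟩ := hreg y
  -- an idempotent modulo `p ^ j` in `yA` generating `yA` modulo `p`
  set f₀ := y * z with hf₀
  have hf₀i : (p : A) ∣ f₀ * f₀ - f₀ := by
    have : f₀ * f₀ - f₀ = (y * z * y - y) * z := by rw [hf₀]; noncomm_ring
    rw [this]; exact Dvd.dvd.mul_right hz z
  obtain ⟨f, r, hfr, hfi, hff₀⟩ : ∃ f r : A, f = y * r ∧ (p : A) ^ j ∣ f * f - f ∧
      (p : A) ∣ f - f₀ := by
    have hpp : 0 < p ^ j := pow_pos hp.pos j
    obtain ⟨m, hm⟩ : ∃ m, p ^ j = m + 1 := ⟨p ^ j - 1, by omega⟩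
    refine ⟨f₀ ^ p ^ j, z * f₀ ^ m, ?_, ?_, ?_⟩
    · rw [hm, pow_succ', hf₀, mul_assoc]
    · have := natCast_pow_dvd_pow_sub_pow ((Commute.refl f₀).mul_left (Commute.refl f₀)) hf₀i j
      rw [(Commute.refl f₀).mul_pow] at this
      exact (pow_dvd_pow _ (Nat.le_succ j)).trans this
    · obtain ⟨B, _, π, hπ⟩ := natCast_pow_dvd_iff_mk (A := A) p 1
      simp only [pow_one] at hπ
      rw [hπ] at hf₀i ⊢
      simp only [map_sub, map_mul, map_pow, sub_eq_zero] at hf₀i ⊢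
      exact IsIdempotentElem.pow_eq hf₀i hpp.ne'
  have hff : (p : A) ^ j ∣ star f * f := by
    have : star f * f = star r * (star y * y) * r := by rw [hfr, star_mul]; noncomm_ring
    rw [this]
    exact Dvd.dvd.mul_right (natCast_pow_dvd_mul_left p j _ hy) _
  have hfis : (p : A) ^ j ∣ star f * star f - star f := by
    have := natCast_pow_dvd_star hfi
    simpa using this
  -- relations modulo `p ^ j` between `F = f` and `G = star f`
  have rel : ∀ {B : Type u} [Ring B] (F G : B), F * F = F → G * G = G → G * F = 0 →
      (F - G) * (F - G) = F + G - F * G ∧ (F - G) * (F - G) * (F - G) = F - G := by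
    intro B _ F G hF hG hGF
    have h1 : (F - G) * (F - G) = F + G - F * G := by
      simp only [mul_sub, sub_mul, hF, hG, hGF]; abel
    refine ⟨h1, ?_⟩
    rw [h1]
    simp only [mul_sub, sub_mul, add_mul, mul_assoc, hF, hG, hGF, mul_zero]; abel
  obtain ⟨τ, hτ3, hτs, hτt⟩ := exists_skew_tripotent (t := f - star f) hp hA
    (by rw [star_sub, star_star]; abel) hj (by
      obtain ⟨B, _, π, hπ⟩ := natCast_pow_dvd_iff_mk (A := A) p j
      rw [hπ] at hfi hff hfis ⊢
      simp only [map_sub, map_mul, sub_eq_zero] at hfi hff hfis ⊢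
      exact (rel _ _ hfi hfis hff).2)
  have hhs : star h = h := by
    have h3 : 2 * star h = 1 := by
      have := congrArg star h2
      rw [star_mul, star_one, star_ofNat] at this
      rw [← this]; exact (Nat.cast_commute 2 (star h)).eq
    calc star h = 1 * star h := by rw [one_mul]
      _ = h * (2 * star h) := by rw [← h2, ← mul_assoc, (hc 2).eq]
      _ = h := by rw [h3, mul_one]
  have hse : star (h * (τ * τ + τ)) = h * (τ * τ - τ) := by
    rw [star_mul, hhs, star_add, star_mul, hτs, (hc _).eq]; noncomm_ring
  have hτ4 : τ * τ * (τ * τ) = τ * τ := by rw [← mul_assoc, hτ3]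
  have hτ3' : τ * (τ * τ) = τ := by rw [← mul_assoc, hτ3]
  have mulh : ∀ a b : A, h * a * (h * b) = h * (h * (a * b)) := by
    intro a b; rw [mul_assoc, ← mul_assoc a h b, ← (hc a).eq, mul_assoc h a b]
  have hec : ∀ {i : ℕ}, i ≤ j → (p : A) ^ i ∣ h * (τ * τ + τ) - f * (1 - h * star f) := by
    intro i hi
    have hτt := (pow_dvd_pow (p : A) hi).trans hτt
    have hfi := (pow_dvd_pow (p : A) hi).trans hfi
    have hff := (pow_dvd_pow (p : A) hi).trans hff
    have hfis := (pow_dvd_pow (p : A) hi).trans hfis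
    obtain ⟨B, _, π, hπ⟩ := natCast_pow_dvd_iff_mk (A := A) p i
    rw [hπ] at hfi hff hfis hτt ⊢
    simp only [map_sub, map_mul, map_add, map_one, sub_eq_zero] at hfi hff hfis hτt ⊢
    rw [hτt, (rel _ _ hfi hfis hff).1]
    have hh2 : π h + π h = 1 := by rw [← map_add, ← two_mul, h2, map_one]
    have hcf : π f * π h = π h * π f := by rw [← map_mul, ← map_mul, (hc f).eq]
    calc π h * (π f + π (star f) - π f * π (star f) + (π f - π (star f)))
        = (π h + π h) * π f - π h * π f * π (star f) := by noncomm_ring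
      _ = _ := by rw [hh2, ← hcf]; noncomm_ring
  refine ⟨h * (τ * τ + τ), ?_, ?_, ?_, ⟨r * (1 - h * star f), ?_⟩, ⟨f * y, ?_⟩⟩
  · rw [mulh]
    congr 1
    have : (τ * τ + τ) * (τ * τ + τ) = 2 * (τ * τ + τ) := by
      simp only [mul_add, add_mul, hτ4, hτ3, hτ3', two_mul]; abel
    rw [this, ← mul_assoc, (hc 2).eq, h2, one_mul]
  · rw [hse, mulh]
    have : (τ * τ - τ) * (τ * τ + τ) = 0 := by
      simp only [mul_add, sub_mul, hτ4, hτ3, hτ3']; abel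
    rw [this, mul_zero, mul_zero]
  · rw [hse, mulh]
    have : (τ * τ + τ) * (τ * τ - τ) = 0 := by
      simp only [mul_sub, add_mul, hτ4, hτ3, hτ3']; abel
    rw [this, mul_zero, mul_zero]
  · rw [← mul_assoc, ← hfr]
    exact hec le_rfl
  · have h1 := hec (i := 1) hj
    have hff := (pow_dvd_pow (p : A) hj).trans hff
    have hfi := (pow_dvd_pow (p : A) hj).trans hfi
    obtain ⟨B, _, π, hπ⟩ := natCast_pow_dvd_iff_mk (A := A) p 1
    have hπ' := hπ
    simp only [pow_one] at hπ'
    rw [hπ'] at hz hff₀ ⊢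
    rw [hπ] at hff h1 hfi
    simp only [map_sub, map_mul, map_add, map_one, sub_eq_zero, hf₀] at *
    rw [← mul_assoc, h1, mul_sub, mul_one, sub_mul, hfi, mul_assoc, mul_assoc (π h), hff, mul_zero, mul_zero,
      sub_zero, hff₀, hz]
end AdicRing

/-! ### Isometries and unit similitudes from hyperbolic idempotents -/

section Isometry
variable {F E : Type*} [Field F] [Ring E] [Algebra F E] [StarRing E]

/-- The hyperbolic lifting property of a `†`-stable subring `R` with respect to the scalar `ϖ`:
every `y ∈ R` whose right ideal is isotropic modulo `ϖ ^ j` admits an idempotent `e ∈ R`, orthogonal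
on both sides to `e†`, with `e ∈ yR + ϖ ^ j R` and `y ∈ eR + ϖR`. -/
def HasHyperbolicLifts (R : Subring E) (ϖ : F) : Prop :=
  ∀ y ∈ R, ∀ j : ℕ, 0 < j → (∃ w ∈ R, star y * y = ϖ ^ j • w) →
    ∃ e ∈ R, e * e = e ∧ star e * e = 0 ∧ e * star e = 0 ∧
      (∃ r ∈ R, ∃ s ∈ R, e = y * r + ϖ ^ j • s) ∧ ∃ r ∈ R, ∃ s ∈ R, y = e * r + ϖ • s

/-- An `x ∈ E` with `x† x ∈ R` is moved into `R` by an isometry `u` of `E`. By induction on the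
denominator `ϖ ^ N` of `x`: if `N > 0`, the element `y = ϖ ^ N x` of `R` is isotropic modulo `ϖ ^ 2`,
and the isometry `ϖ e + ϖ⁻¹ e† + (1 - e - e†)` attached to a hyperbolic lift `e` of `y` lowers
the denominator. -/
theorem exists_isometry_mul_mem {R : Subring E} {ϖ : F} (hϖ : ϖ ≠ 0)
    (hstar : ∀ (r : F) (x : E), star (r • x) = r • star x)
    (hRstar : ∀ x ∈ R, star x ∈ R) (hϖR : ∀ x ∈ R, ϖ • x ∈ R)
    (hlift : HasHyperbolicLifts R ϖ) (N : ℕ) (x : E) (hN : ϖ ^ N • x ∈ R)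
    (hx : star x * x ∈ R) :
    ∃ u : E, star u * u = 1 ∧ u * star u = 1 ∧ u * x ∈ R := by
  induction N generalizing x with
  | zero => exact ⟨1, by simp, by simp, by simpa using hN⟩
  | succ N ih =>
    have hpow : ∀ (k : ℕ) (z : E), z ∈ R → ϖ ^ k • z ∈ R := by
      intro k z hz
      induction k with
      | zero => simpa using hz
      | succ k ihk => rw [pow_succ', mul_smul]; exact hϖR _ ihk
    obtain ⟨e, he, hee, hse, hes, ⟨r, hr, s, hs, hers⟩, r', hr', s', hs', hy⟩ :=
      hlift _ hN 2 two_pos ⟨ϖ ^ (2 * N) • (star x * x), hpow _ _ hx, by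
        rw [hstar, smul_mul_smul_comm, smul_smul]; congr 1; ring⟩
    set y := ϖ ^ (N + 1) • x with hydef
    set f := star e with hf
    have hff : f * f = f := by rw [hf, ← star_mul, hee]
    have hfR : f ∈ R := hRstar _ he
    have hsf : star f = e := star_star e
    set e₀ := 1 - e - f with he₀
    have he₀R : e₀ ∈ R := R.sub_mem (R.sub_mem R.one_mem he) hfR
    have he₀e : e₀ * e = 0 := by rw [he₀]; simp only [sub_mul, one_mul, hee, hse]; simp
    -- the isometry scaling the isotropic right ideals `eE` and `e†E` by `ϖ` and `ϖ⁻¹`;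
    -- `ϖ ^ N • (g * x)` lies in `R`, so one power of `ϖ` has been gained
    set g := ϖ • e + ϖ⁻¹ • f + e₀ with hg
    have hsg : star g = ϖ • f + ϖ⁻¹ • e + e₀ := by
      rw [hg, star_add, star_add, hstar, hstar, hsf, he₀, star_sub, star_sub, star_one, hsf, ← hf]
      abel
    have hrel : ∀ a b : E, a * a = a → b * b = b → a * b = 0 → b * a = 0 →
        (ϖ • a + ϖ⁻¹ • b + (1 - a - b)) * (ϖ • b + ϖ⁻¹ • a + (1 - a - b)) = 1 := by
      intro a b ha hb hab hba
      simp only [mul_add, add_mul, mul_sub, sub_mul, mul_one, one_mul, smul_mul_assoc,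
        mul_smul_comm, ha, hb, hab, hba, smul_zero, smul_add, smul_sub, smul_inv_smul₀ hϖ,
        inv_smul_smul₀ hϖ]
      abel
    have hgg : star g * g = 1 := by
      have := hrel f e hff hee hse hes
      rw [hsg, hg, he₀, sub_right_comm 1 e f]; exact this
    have hgg' : g * star g = 1 := by
      rw [hsg, hg, he₀]; exact hrel e f hee hff hes hse
    have hfy : ∃ v ∈ R, f * y = ϖ ^ 2 • v := by
      refine ⟨star r * (ϖ ^ (2 * N) • (star x * x)) + star s * y, ?_, ?_⟩
      · exact R.add_mem (R.mul_mem (hRstar _ hr) (hpow _ _ hx)) (R.mul_mem (hRstar _ hs) hN)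
      · have h1 : f = star r * star y + ϖ ^ 2 • star s := by
          conv_lhs => rw [hf, hers]
          rw [star_add, star_mul, hstar (ϖ ^ 2)]
        have h2 : star y * y = ϖ ^ 2 • (ϖ ^ (2 * N) • (star x * x)) := by
          rw [hydef, hstar, smul_mul_smul_comm, smul_smul]; congr 1; ring
        conv_lhs => rw [h1]
        rw [add_mul, mul_assoc, h2, smul_add, smul_mul_assoc, mul_smul_comm (ϖ ^ 2)]
    obtain ⟨v, hv, hfv⟩ := hfy
    have he₀y : e₀ * y = ϖ • (e₀ * s') := by
      rw [hy, mul_add, ← mul_assoc, he₀e, zero_mul, zero_add, mul_smul_comm]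
    obtain ⟨u, hu1, hu2, hu3⟩ := ih (g * x) (by
      have h1 : ϖ ^ N • (g * x) = ϖ⁻¹ • (g * y) := by
        rw [hydef, mul_smul_comm, smul_smul, pow_succ', inv_mul_cancel_left₀ hϖ]
      rw [h1, hg, add_mul, add_mul, smul_mul_assoc, smul_mul_assoc, hfv, he₀y, smul_add, smul_add,
        smul_smul, smul_smul, smul_smul, smul_smul, inv_mul_cancel₀ hϖ, one_smul, one_smul,
        show ϖ⁻¹ * ϖ⁻¹ * ϖ ^ 2 = 1 by field_simp, one_smul]
      exact R.add_mem (R.add_mem (R.mul_mem he hN) hv) (R.mul_mem he₀R hs')) (by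
      rw [star_mul, mul_assoc, ← mul_assoc (star g), hgg, one_mul]; exact hx)
    refine ⟨u * g, ?_, ?_, by rwa [mul_assoc]⟩
    · rw [star_mul, mul_assoc, ← mul_assoc (star u), hu1, one_mul, hgg]
    · rw [star_mul, mul_assoc, ← mul_assoc g, hgg', one_mul, hu2]

/-- If `q` is a unit of `R` and the form `q` represents `ϖ ν` over `R` with `ν` a unit, then it
represents `ν`. Indeed `b b† ∈ ϖR`, so `b†R` is isotropic modulo `ϖ`; being its own orthogonal
there, it lifts to an idempotent `e` with `e + e† = 1`. The similitude `e + ϖ e†` of factor `ϖ`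
then gives the solution `b' = ϖ⁻¹ b (e + ϖ e†) ∈ R`. -/
theorem exists_unit_similitude {R : Subring E} {ϖ ν : F} (hϖ : ϖ ≠ 0) (hν : ν ≠ 0)
    (hstar : ∀ (r : F) (x : E), star (r • x) = r • star x)
    (hRstar : ∀ x ∈ R, star x ∈ R)
    (hνR : ∀ x ∈ R, ν • x ∈ R) (hνR' : ∀ x ∈ R, ν⁻¹ • x ∈ R)
    (hsep : ∀ x ∈ R, x * x = x → (∃ s ∈ R, x = ϖ • s) → x = 0)
    (hlift : HasHyperbolicLifts R ϖ) {q w b : E} (hq : q ∈ R) (hw : w ∈ R) (hqw : q * w = 1)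
    (hb : b ∈ R) (hbqb : star b * q * b = (ϖ * ν) • (1 : E))
    (hbbq : b * star b * q = (ϖ * ν) • (1 : E)) :
    ∃ b' ∈ R, star b' * q * b' = ν • (1 : E) := by
  have hbb : b * star b = ϖ • (ν • w) := by
    calc b * star b = b * star b * q * w := by rw [mul_assoc _ q, hqw, mul_one]
      _ = _ := by rw [hbbq, smul_mul_assoc, one_mul, mul_smul]
  obtain ⟨e, he, hee, hse, hes, -, r, hr, s, hs, hy⟩ :=
    hlift (star b) (hRstar _ hb) 1 one_pos ⟨ν • w, hνR _ hw, by rw [star_star, hbb, pow_one]⟩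
  set f := star e with hf
  have hff : f * f = f := by rw [hf, ← star_mul, hee]
  have hfR : f ∈ R := hRstar _ he
  set e₀ := 1 - e - f with he₀
  have he₀R : e₀ ∈ R := R.sub_mem (R.sub_mem R.one_mem he) hfR
  have he₀e : e₀ * e = 0 := by rw [he₀]; simp only [sub_mul, one_mul, hee, hse]; simp
  have hfe₀ : f * e₀ = 0 := by rw [he₀]; simp only [mul_sub, mul_one, hff, hse]; simp
  have he₀i : e₀ * e₀ = e₀ := by
    conv_lhs => rhs; rw [he₀]
    rw [mul_sub, mul_sub, mul_one, he₀e, he₀]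
    simp only [sub_mul, one_mul, hff, hes]; simp
  have hb' : b = star r * f + ϖ • star s := by
    rw [← star_star b, hy, star_add, star_mul, hstar]
  have hbe₀ : b * e₀ = ϖ • (star s * e₀) := by
    rw [hb', add_mul, mul_assoc, hfe₀, mul_zero, zero_add, smul_mul_assoc]
  -- `e₀` lies in the orthogonal of `b†R` modulo `ϖ`, which is `b†R` itself
  have h1 : e₀ = star b * (ν⁻¹ • (q * (star s * e₀))) := by
    have h2 : (ϖ * ν) • e₀ = ϖ • (star b * (q * (star s * e₀))) := by
      calc (ϖ * ν) • e₀ = star b * q * (b * e₀) := by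
            rw [← mul_assoc, hbqb, smul_mul_assoc, one_mul]
        _ = _ := by rw [hbe₀, mul_smul_comm, mul_assoc]
    rw [mul_smul_comm, eq_inv_smul_iff₀ hν]
    exact smul_right_injective E hϖ (by simpa [mul_smul] using h2)
  have h0 : e₀ = 0 := by
    set t := ν⁻¹ • (q * (star s * e₀)) with ht
    have htR : t ∈ R := hνR' _ (R.mul_mem hq (R.mul_mem (hRstar _ hs) he₀R))
    refine hsep e₀ he₀R he₀i ⟨e₀ * (s * t), R.mul_mem he₀R (R.mul_mem hs htR), ?_⟩
    calc e₀ = e₀ * e₀ := he₀i.symm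
      _ = e₀ * ((e * r + ϖ • s) * t) := by rw [← hy, ← h1]
      _ = e₀ * e * (r * t) + ϖ • (e₀ * (s * t)) := by
        simp only [add_mul, mul_add, smul_mul_assoc, mul_smul_comm, mul_assoc]
      _ = _ := by rw [he₀e, zero_mul, zero_add]
  have hef : e + f = 1 := by
    rw [he₀, sub_sub, sub_eq_zero] at h0; exact h0.symm
  refine ⟨star s * e + b * f, R.add_mem (R.mul_mem (hRstar _ hs) he) (R.mul_mem hb hfR), ?_⟩
  have hbe : b * e = ϖ • (star s * e) := by
    rw [hb', add_mul, mul_assoc, hse, mul_zero, zero_add, smul_mul_assoc]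
  have hb'u : star s * e + b * f = ϖ⁻¹ • (b * (e + ϖ • f)) := by
    rw [mul_add, hbe, mul_smul_comm, smul_add, inv_smul_smul₀ hϖ, inv_smul_smul₀ hϖ]
  have huu : (f + ϖ • e) * (e + ϖ • f) = ϖ • (1 : E) := by
    simp only [mul_add, add_mul, smul_mul_assoc, mul_smul_comm, hse, hff, hee, hes]
    rw [← hef]; simp [add_comm]
  rw [hb'u, hstar, star_mul, star_add, hstar, ← hf, star_star, smul_mul_assoc, smul_mul_assoc,
    mul_smul_comm, smul_smul]
  calc (ϖ⁻¹ * ϖ⁻¹) • ((f + ϖ • e) * star b * q * (b * (e + ϖ • f)))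
      = (ϖ⁻¹ * ϖ⁻¹) • ((f + ϖ • e) * (star b * q * b) * (e + ϖ • f)) := by
        simp only [mul_assoc]
    _ = (ϖ⁻¹ * ϖ⁻¹ * (ϖ * ν) * ϖ) • (1 : E) := by
        rw [hbqb, mul_smul_comm, mul_one, smul_mul_assoc, huu, smul_smul, smul_smul]
    _ = ν • (1 : E) := by congr 1; field_simp
end Isometry

/-! ### Lattices in `ℚ_p`-vector spaces -/

section Lattice
variable {p : ℕ} [Fact p.Prime]

/-- A full lattice `M` in a `ℚ_p`-vector space is the unit ball for the coordinates in some
`ℚ_p`-basis. All lattices and orders below are handled through such a basis. -/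
theorem exists_latticeBasis {V : Type*} [AddCommGroup V] [Module ℚ_[p] V] [Module ℤ_[p] V]
    [IsScalarTower ℤ_[p] ℚ_[p] V] {M : Submodule ℤ_[p] V} (hfg : M.FG)
    (hspan : Submodule.span ℚ_[p] (M : Set V) = ⊤) :
    ∃ (n : ℕ) (b : Module.Basis (Fin n) ℚ_[p] V), ∀ v, v ∈ M ↔ ∀ i, ‖b.repr v i‖ ≤ 1 := by
  have : Submodule.IsLattice ℚ_[p] M := ⟨hfg, hspan⟩
  have : Module.Free ℤ_[p] M := Submodule.IsLattice.free ℚ_[p] M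
  have : Module.Finite ℤ_[p] M := Submodule.IsLattice.finite ℚ_[p] M
  let b₀ := Module.finBasis ℤ_[p] M
  let b := b₀.extendOfIsLattice ℚ_[p]
  have hb : ∀ i, b i = (b₀ i : V) := fun i => by simp [b]
  have hsm : ∀ (c : ℤ_[p]) (v : V), c • v = (c : ℚ_[p]) • v := fun c v => by
    rw [← algebraMap_smul ℚ_[p] c v]; rfl
  refine ⟨_, b, fun v => ⟨fun hv i => ?_, fun hv => ?_⟩⟩
  · have h1 : v = ∑ i, ((b₀.repr ⟨v, hv⟩ i : ℤ_[p]) : ℚ_[p]) • b i := by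
      have := congrArg (Subtype.val) (b₀.sum_repr ⟨v, hv⟩)
      simp only [Submodule.coe_sum, Submodule.coe_smul] at this
      simp only [hb, ← hsm]
      exact this.symm
    have h2 : b.repr v i = (b₀.repr ⟨v, hv⟩ i : ℤ_[p]) := by
      conv_lhs => rw [h1]
      rw [b.repr_sum_self]
    rw [h2]
    exact PadicInt.norm_le_one _
  · rw [← b.sum_repr v]
    refine Submodule.sum_mem _ fun i _ => ?_
    let c : ℤ_[p] := ⟨b.repr v i, hv i⟩
    have h1 : c • (b₀ i : V) ∈ M := M.smul_mem c (b₀ i).2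
    rw [hsm] at h1
    rw [hb]; exact h1

theorem padic_exists_limit (x : ℕ → ℚ_[p])
    (hx : ∀ n, ‖x (n + 1) - x n‖ ≤ ((p : ℝ)⁻¹) ^ (n + 1)) :
    ∃ l, ∀ n, ‖l - x n‖ ≤ ((p : ℝ)⁻¹) ^ (n + 1) := by
  have hp1 : (1 : ℝ) < p := by exact_mod_cast (Fact.out : p.Prime).one_lt
  have hp0 : (0 : ℝ) ≤ (p : ℝ)⁻¹ := by positivity
  have hle : (p : ℝ)⁻¹ ≤ 1 := inv_le_one_of_one_le₀ hp1.le
  have hc : CauchySeq x := by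
    refine cauchySeq_of_le_geometric (p : ℝ)⁻¹ 1 (inv_lt_one_of_one_lt₀ hp1) fun n => ?_
    rw [dist_comm, dist_eq_norm, one_mul]
    exact (hx n).trans (pow_le_pow_of_le_one hp0 hle (Nat.le_succ n))
  obtain ⟨l, hl⟩ := cauchySeq_tendsto_of_complete hc
  refine ⟨l, fun n => ?_⟩
  have hk : ∀ k, ‖x (n + k) - x n‖ ≤ ((p : ℝ)⁻¹) ^ (n + 1) := by
    intro k
    induction k with
    | zero => simp
    | succ k ih =>
      have : x (n + (k + 1)) - x n = (x (n + k + 1) - x (n + k)) + (x (n + k) - x n) := by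
        rw [← add_assoc]; ring
      rw [this]
      refine (Padic.nonarchimedean _ _).trans (max_le ?_ ih)
      exact (hx _).trans (pow_le_pow_of_le_one hp0 hle (by omega))
  refine le_of_tendsto ((hl.sub_const (x n)).norm) ?_
  filter_upwards [Filter.eventually_ge_atTop n] with m hm
  obtain ⟨k, rfl⟩ := Nat.exists_eq_add_of_le hm
  exact hk k

/-- In lattice coordinates, `p ^ k M` is the ball of radius `p ^ (-k)`. -/
theorem exists_pow_smul_mem_iff {V : Type*} [AddCommGroup V] [Module ℚ_[p] V] {M : Set V}
    {n : ℕ} {b : Module.Basis (Fin n) ℚ_[p] V}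
    (hb : ∀ v, v ∈ M ↔ ∀ i, ‖b.repr v i‖ ≤ 1) (k : ℕ) (v : V) :
    (∃ w ∈ M, v = (p : ℚ_[p]) ^ k • w) ↔ ∀ i, ‖b.repr v i‖ ≤ ((p : ℝ)⁻¹) ^ k := by
  have hp0 : (p : ℚ_[p]) ≠ 0 := by exact_mod_cast (Fact.out : p.Prime).ne_zero
  have hpr : (0 : ℝ) < p := by exact_mod_cast (Fact.out : p.Prime).pos
  constructor
  · rintro ⟨w, hw, rfl⟩ i
    simp only [map_smul, Finsupp.smul_apply, smul_eq_mul, norm_mul, norm_pow, Padic.norm_p]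
    exact mul_le_of_le_one_right (by positivity) ((hb w).1 hw i)
  · intro h
    refine ⟨((p : ℚ_[p]) ^ k)⁻¹ • v, (hb _).2 fun i => ?_, by
      rw [smul_inv_smul₀ (pow_ne_zero _ hp0)]⟩
    simp only [map_smul, Finsupp.smul_apply, smul_eq_mul, norm_mul, norm_pow, Padic.norm_p,
      norm_inv]
    rw [inv_mul_le_iff₀ (by positivity), mul_one]
    exact h i

variable {E : Type*} [Ring E] [Algebra ℚ_[p] E]

/-- Divisibility by `p ^ k` inside `R` agrees with lying in `p ^ k • R` for the scalar action
on `E`. -/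
theorem natCast_pow_dvd_subring_iff (R : Subring E) (k : ℕ) (x : R) :
    (p : R) ^ k ∣ x ↔ ∃ w ∈ R, (x : E) = (p : ℚ_[p]) ^ k • w := by
  have key : ∀ w : R, (((p : R) ^ k * w : R) : E) = (p : ℚ_[p]) ^ k • (w : E) := by
    intro w
    rw [Algebra.smul_def]
    simp
  constructor
  · rintro ⟨w, rfl⟩
    exact ⟨w, w.2, key w⟩
  · rintro ⟨w, hw, h⟩
    exact ⟨⟨w, hw⟩, Subtype.ext (by rw [key, h])⟩

theorem pow_inv_tendsto_le {x : ℚ_[p]} (h : ∀ n : ℕ, ‖x‖ ≤ ((p : ℝ)⁻¹) ^ n) : x = 0 := by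
  have hp1 : (1 : ℝ) < p := by exact_mod_cast (Fact.out : p.Prime).one_lt
  rw [← norm_le_zero_iff]
  exact ge_of_tendsto' (tendsto_pow_atTop_nhds_zero_of_lt_one (by positivity)
    (inv_lt_one_of_one_lt₀ hp1)) h

end Lattice

/-! ### Orders as `p`-adically complete rings -/

section OrderProps
variable {p : ℕ} [Fact p.Prime] {E : Type*} [Ring E] [Algebra ℚ_[p] E]

theorem smul_mem_of_norm_le_one {V : Type*} [AddCommGroup V] [Module ℚ_[p] V] {M : Set V}
    {n : ℕ} {b : Module.Basis (Fin n) ℚ_[p] V}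
    (hb : ∀ v, v ∈ M ↔ ∀ i, ‖b.repr v i‖ ≤ 1) {c : ℚ_[p]} (hc : ‖c‖ ≤ 1) {v : V}
    (hv : v ∈ M) : c • v ∈ M := by
  refine (hb _).2 fun i => ?_
  simp only [map_smul, Finsupp.smul_apply, smul_eq_mul, norm_mul]
  exact mul_le_one₀ hc (norm_nonneg _) ((hb v).1 hv i)

/-- A subring which is a lattice is `p`-adically complete, coordinate by coordinate. -/
theorem pComplete_of_basis {R : Subring E} {n : ℕ} {b : Module.Basis (Fin n) ℚ_[p] E}
    (hb : ∀ v, v ∈ (R : Set E) ↔ ∀ i, ‖b.repr v i‖ ≤ 1) : PComplete p R := by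
  have hdvd : ∀ (k : ℕ) (x : R), (p : R) ^ k ∣ x ↔ ∀ i, ‖b.repr (x : E) i‖ ≤ ((p : ℝ)⁻¹) ^ k :=
    fun k x => (natCast_pow_dvd_subring_iff R k x).trans (exists_pow_smul_mem_iff hb k (x : E))
  refine ⟨fun x hx => ?_, fun x hx => ?_⟩
  · have : (x : E) = 0 := by
      apply b.repr.injective
      ext i
      rw [map_zero, Finsupp.zero_apply]
      exact pow_inv_tendsto_le fun n => (hdvd n x).1 (hx n) i
    exact_mod_cast this
  · have h1 : ∀ i, ∃ l, ∀ n, ‖l - b.repr (x n : E) i‖ ≤ ((p : ℝ)⁻¹) ^ (n + 1) := fun i =>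
      padic_exists_limit (fun n => b.repr (x n : E) i) fun n => by
        have := (hdvd (n + 1) _).1 (hx n) i
        simpa using this
    choose l hl using h1
    have hrepr : ∀ i, b.repr (∑ j, l j • b j) i = l i := fun i => by rw [b.repr_sum_self]
    have hsmall : ∀ n, ∀ i, ‖b.repr ((∑ j, l j • b j) - (x n : E)) i‖ ≤ ((p : ℝ)⁻¹) ^ (n + 1) :=
      fun n i => by
        rw [map_sub, Finsupp.sub_apply, hrepr]; exact hl i n
    obtain ⟨w, hw, hwe⟩ := (exists_pow_smul_mem_iff hb 1 _).2 (hsmall 0)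
    have hmem : (∑ j, l j • b j) ∈ R := by
      have hpw : (p : ℚ_[p]) ^ 1 • w ∈ (R : Set E) :=
        smul_mem_of_norm_le_one hb (by
          rw [pow_one]; exact Padic.norm_p_lt_one.le) hw
      have := R.add_mem (hwe ▸ hpw : _ ∈ R) (x 0).2
      simpa using this
    exact ⟨⟨_, hmem⟩, fun n => (hdvd (n + 1) _).2 fun i => hsmall n i⟩

/-- A `†`-stable order whose reduction modulo `p` is von Neumann regular has the hyperbolic lifting
property: it is `p`-adically complete and contains `1 / 2`. -/
theorem hasHyperbolicLifts_of_basis [StarRing E] (hp : p ≠ 2) {R : Subring E} {n : ℕ}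
    {b : Module.Basis (Fin n) ℚ_[p] E} (hb : ∀ v, v ∈ (R : Set E) ↔ ∀ i, ‖b.repr v i‖ ≤ 1)
    (hRstar : ∀ x ∈ R, star x ∈ R)
    (hreg : ∀ y ∈ R, ∃ z ∈ R, ∃ w ∈ R, y * z * y - y = (p : ℚ_[p]) • w) :
    HasHyperbolicLifts R (p : ℚ_[p]) := by
  let : StarRing R :=
    { star := fun x => ⟨star (x : E), hRstar _ x.2⟩
      star_involutive := fun x => Subtype.ext (star_star (x : E))
      star_mul := fun x y => Subtype.ext (star_mul (x : E) y)
      star_add := fun x y => Subtype.ext (star_add (x : E) y) }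
  have hstar : ∀ x : R, ((star x : R) : E) = star (x : E) := fun _ => rfl
  have h2 : ‖(2 : ℚ_[p])⁻¹‖ ≤ 1 := by
    have : ‖((2 : ℕ) : ℚ_[p])‖ = 1 := by
      rw [Padic.norm_natCast_eq_one_iff]
      exact (Nat.coprime_primes (Fact.out : p.Prime) Nat.prime_two).2 hp
    rw [norm_inv]
    have h : ‖(2 : ℚ_[p])‖ = 1 := by exact_mod_cast this
    rw [h]; simp
  have hhalf : (2 : ℚ_[p])⁻¹ • (1 : E) ∈ R := smul_mem_of_norm_le_one hb h2 R.one_mem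
  intro y hy j hj ⟨w, hw, hyw⟩
  have hd := fun (k : ℕ) (x : R) => natCast_pow_dvd_subring_iff (p := p) R k x
  obtain ⟨e, he, he1, he2, ⟨r, hr⟩, r', hr'⟩ := exists_hyperbolic_idempotent (p := p)
    ((Fact.out : p.Prime).odd_of_ne_two hp) (pComplete_of_basis hb)
    (h := (⟨_, hhalf⟩ : R)) (Subtype.ext (by
      rw [two_mul]
      push_cast
      rw [← add_smul, ← two_mul, mul_inv_cancel₀ two_ne_zero, one_smul]))
    (fun x => Subtype.ext (by simp)) (fun y => by
      obtain ⟨z, hz, w, hw, h⟩ := hreg y y.2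
      refine ⟨⟨z, hz⟩, ?_⟩
      have := (hd 1 (y * ⟨z, hz⟩ * y - y)).2 ⟨w, hw, by simpa using h⟩
      simpa using this) (y := ⟨y, hy⟩) hj
    ((hd _ _).2 ⟨w, hw, hyw⟩)
  obtain ⟨s, hs, hes⟩ := (hd _ _).1 hr
  obtain ⟨s', hs', hes'⟩ := (hd 1 _).1 (by simpa using hr')
  refine ⟨e, e.2, congrArg Subtype.val he, congrArg Subtype.val he1, congrArg Subtype.val he2,
    ⟨r, r.2, s, hs, ?_⟩, ⟨r', r'.2, s', hs', ?_⟩⟩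
  · rw [← hes]; push_cast; abel
  · rw [← pow_one (p : ℚ_[p]), ← hes']; push_cast; abel

/-- An idempotent of an order divisible by `p` is divisible by every power of `p`. -/
theorem idempotent_eq_zero_of_basis {R : Subring E} {n : ℕ} {b : Module.Basis (Fin n) ℚ_[p] E}
    (hb : ∀ v, v ∈ (R : Set E) ↔ ∀ i, ‖b.repr v i‖ ≤ 1) {x : E} (hx : x * x = x)
    (h : ∃ s ∈ R, x = (p : ℚ_[p]) • s) : x = 0 := by
  obtain ⟨s, hs, rfl⟩ := h
  set x := (p : ℚ_[p]) • s with hxdef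
  have hpow : ∀ k : ℕ, x = x ^ (k + 1) := fun k => by
    induction k with
    | zero => simp
    | succ k ih => rw [pow_succ, ← ih, hx]
  apply b.repr.injective
  ext i
  rw [map_zero, Finsupp.zero_apply]
  refine pow_inv_tendsto_le fun k => ?_
  refine ((exists_pow_smul_mem_iff hb (k + 1) x).1
    ⟨s ^ (k + 1), R.pow_mem hs _, ?_⟩ i).trans ?_
  · rw [hpow k, hxdef, smul_pow]
  · have hp1 : (1 : ℝ) < p := by exact_mod_cast (Fact.out : p.Prime).one_lt
    exact pow_le_pow_of_le_one (by positivity) (inv_le_one_of_one_le₀ hp1.le) (Nat.le_succ k)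

/-- For `q` in an order `R`, `det L_q` is integral and is a right multiple `q w` of `q` with
`w ∈ R`: take `w = adj(L_q) 1`. -/
theorem exists_mul_eq_det_smul_one {R : Subring E} {n : ℕ} {b : Module.Basis (Fin n) ℚ_[p] E}
    (hb : ∀ v, v ∈ (R : Set E) ↔ ∀ i, ‖b.repr v i‖ ≤ 1) {q : E} (hq : q ∈ R) :
    ‖LinearMap.det (LinearMap.mulLeft ℚ_[p] q)‖ ≤ 1 ∧
      ∃ w ∈ R, q * w = LinearMap.det (LinearMap.mulLeft ℚ_[p] q) • (1 : E) := by
  have hbR : ∀ j, b j ∈ R := fun j => (hb _).2 fun i => by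
    rw [b.repr_self, Finsupp.single_apply]; split_ifs <;> simp
  have hA : ∀ i j, ‖b.repr (q * b j) i‖ ≤ 1 := fun i j => (hb _).1 (R.mul_mem hq (hbR j)) i
  let A : Matrix (Fin n) (Fin n) ℤ_[p] := fun i j => ⟨b.repr (q * b j) i, hA i j⟩
  let φ : ℤ_[p] →+* ℚ_[p] := algebraMap ℤ_[p] ℚ_[p]
  have hAL : LinearMap.toMatrix b b (LinearMap.mulLeft ℚ_[p] q) = φ.mapMatrix A := by
    ext i j
    rw [LinearMap.toMatrix_apply, LinearMap.mulLeft_apply]; rfl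
  have hdet : LinearMap.det (LinearMap.mulLeft ℚ_[p] q) = (A.det : ℤ_[p]) := by
    rw [← LinearMap.det_toMatrix b, hAL, ← RingHom.map_det]; rfl
  let c : Fin n → ℤ_[p] := fun i => ⟨b.repr 1 i, (hb _).1 R.one_mem i⟩
  let w : E := b.equivFun.symm (φ ∘ (A.adjugate.mulVec c))
  refine ⟨by rw [hdet]; exact PadicInt.norm_le_one _, w, (hb _).2 fun i => ?_, ?_⟩
  · have : b.repr w i = (A.adjugate.mulVec c) i := by
      change b.equivFun w i = _
      simp only [w, LinearEquiv.apply_symm_apply]; rfl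
    rw [this]; exact PadicInt.norm_le_one _
  · apply b.equivFun.injective
    have h1 : b.equivFun (q * w) = (φ.mapMatrix A).mulVec (b.equivFun w) := by
      rw [← hAL]
      exact (LinearMap.toMatrix_mulVec_repr b b (LinearMap.mulLeft ℚ_[p] q) w).symm
    rw [h1, map_smul]
    simp only [w, LinearEquiv.apply_symm_apply]
    have h2 : (φ.mapMatrix A).mulVec (φ ∘ (A.adjugate.mulVec c)) =
        φ ∘ (A.mulVec (A.adjugate.mulVec c)) := by
      ext i; exact (RingHom.map_mulVec φ A _ i).symm
    rw [h2, Matrix.mulVec_mulVec, Matrix.mul_adjugate, Matrix.smul_mulVec, Matrix.one_mulVec, hdet]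
    ext i
    change ((A.det * c i : ℤ_[p]) : ℚ_[p]) = _
    rw [PadicInt.coe_mul]
    rfl

end OrderProps

/-! ### Averaging over a finite group -/

section Averaging
variable {p : ℕ} [Fact p.Prime] {E V G : Type*} [Ring E] [Algebra ℚ_[p] E]
  [AddCommGroup V] [Module ℚ_[p] V] [Group G] [Fintype G]

/-- The average of the endomorphism `T` over the conjugation action of the finite group `G`,
acting on `V` through `σ`; it is the projection of `T` onto the commutant of `G`. -/
noncomputable def groupAverage (σ : G →* Module.End ℚ_[p] V) (T : Module.End ℚ_[p] V) :
    Module.End ℚ_[p] V :=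
  (Fintype.card G : ℚ_[p])⁻¹ • ∑ g, σ g⁻¹ * T * σ g

theorem commute_groupAverage (σ : G →* Module.End ℚ_[p] V) (T : Module.End ℚ_[p] V) (h : G) :
    Commute (groupAverage σ T) (σ h) := by
  unfold groupAverage
  refine Commute.smul_left ?_ _
  rw [commute_iff_eq, Finset.sum_mul, Finset.mul_sum]
  refine Fintype.sum_equiv (Equiv.mulRight h) _ _ fun g => ?_
  simp only [Equiv.coe_mulRight, mul_inv_rev, map_mul, ← mul_assoc]
  rw [← map_mul σ h h⁻¹, mul_inv_cancel, map_one, one_mul]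

theorem groupAverage_smul (σ : G →* Module.End ℚ_[p] V) (c : ℚ_[p]) (T : Module.End ℚ_[p] V) :
    groupAverage σ (c • T) = c • groupAverage σ T := by
  unfold groupAverage
  rw [smul_comm c]
  simp only [mul_smul_comm, smul_mul_assoc, Finset.smul_sum]

theorem groupAverage_sub (σ : G →* Module.End ℚ_[p] V) (S T : Module.End ℚ_[p] V) :
    groupAverage σ (S - T) = groupAverage σ S - groupAverage σ T := by
  unfold groupAverage
  rw [← smul_sub, ← Finset.sum_sub_distrib]
  simp only [mul_sub, sub_mul]

theorem groupAverage_of_commute {σ : G →* Module.End ℚ_[p] V} {T : Module.End ℚ_[p] V}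
    (h : ∀ g, Commute T (σ g)) : groupAverage σ T = T := by
  have hc : (Fintype.card G : ℚ_[p]) ≠ 0 := by exact_mod_cast Fintype.card_ne_zero
  have : ∀ g, σ g⁻¹ * T * σ g = T := fun g => by
    rw [mul_assoc, (h g).eq, ← mul_assoc, ← map_mul, inv_mul_cancel, map_one, one_mul]
  unfold groupAverage
  simp only [this, Finset.sum_const, Finset.card_univ]
  rw [← Nat.cast_smul_eq_nsmul ℚ_[p], inv_smul_smul₀ hc]

theorem groupAverage_mul_mul {σ : G →* Module.End ℚ_[p] V} {A B : Module.End ℚ_[p] V}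
    (hA : ∀ g, Commute A (σ g)) (hB : ∀ g, Commute B (σ g)) (T : Module.End ℚ_[p] V) :
    groupAverage σ (A * T * B) = A * groupAverage σ T * B := by
  unfold groupAverage
  rw [mul_smul_comm, smul_mul_assoc, Finset.mul_sum, Finset.sum_mul]
  congr 1
  refine Finset.sum_congr rfl fun g _ => ?_
  have h1 := (hA g⁻¹).eq
  have h2 := (hB g).eq
  calc σ g⁻¹ * (A * T * B) * σ g = (σ g⁻¹ * A) * T * (B * σ g) := by simp only [mul_assoc]
    _ = A * (σ g⁻¹ * T * σ g) * B := by rw [← h1, h2]; simp only [mul_assoc]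

theorem trace_mul_groupAverage {σ : G →* Module.End ℚ_[p] V} {A : Module.End ℚ_[p] V}
    (hA : ∀ g, Commute A (σ g)) (T : Module.End ℚ_[p] V) :
    LinearMap.trace ℚ_[p] V (A * groupAverage σ T) = LinearMap.trace ℚ_[p] V (A * T) := by
  have hc : (Fintype.card G : ℚ_[p]) ≠ 0 := by exact_mod_cast Fintype.card_ne_zero
  have : ∀ g, LinearMap.trace ℚ_[p] V (A * (σ g⁻¹ * T * σ g)) =
      LinearMap.trace ℚ_[p] V (A * T) := fun g => by
    rw [← mul_assoc, LinearMap.trace_mul_comm]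
    rw [show σ g * (A * (σ g⁻¹ * T)) = (σ g * A) * σ g⁻¹ * T by simp only [mul_assoc],
      ← (hA g).eq, mul_assoc A, ← map_mul, mul_inv_cancel, map_one, mul_one]
  unfold groupAverage
  rw [mul_smul_comm, map_smul, Finset.mul_sum, map_sum]
  simp only [this, Finset.sum_const, Finset.card_univ]
  rw [nsmul_eq_mul, smul_eq_mul, inv_mul_cancel_left₀ hc]

/-- If `E` is the commutant of a finite group acting on `V`, left and right multiplication by `b`
have the same determinant on `E`: the trace form `(x, y) ↦ tr_V (x y)` is nondegenerate on `E` by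
averaging, and it makes right multiplication adjoint to left multiplication. -/
theorem det_mulLeft_eq_det_mulRight [FiniteDimensional ℚ_[p] E] [FiniteDimensional ℚ_[p] V]
    {ρ : E →ₐ[ℚ_[p]] Module.End ℚ_[p] V}
    (hinj : Function.Injective ρ) {σ : G →* Module.End ℚ_[p] V}
    (hcomm : ∀ x g, Commute (ρ x) (σ g))
    (hsurj : ∀ f : Module.End ℚ_[p] V, (∀ g, Commute f (σ g)) → ∃ x, ρ x = f) (b : E) :
    LinearMap.det (LinearMap.mulLeft ℚ_[p] b) = LinearMap.det (LinearMap.mulRight ℚ_[p] b) := by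
  let B : E →ₗ[ℚ_[p]] Module.Dual ℚ_[p] E :=
    LinearMap.mk₂ ℚ_[p] (fun x y => LinearMap.trace ℚ_[p] V (ρ (x * y)))
      (fun x x' y => by simp [add_mul]) (fun c x y => by simp)
      (fun x y y' => by simp [mul_add]) (fun c x y => by simp)
  have hB : ∀ x y, B x y = LinearMap.trace ℚ_[p] V (ρ (x * y)) := fun _ _ => rfl
  have hBinj : Function.Injective B := by
    rw [injective_iff_map_eq_zero]
    intro x hx
    apply hinj
    rw [map_zero]
    have h0 : ∀ T, LinearMap.trace ℚ_[p] V (ρ x * T) = 0 := fun T => by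
      obtain ⟨y, hy⟩ := hsurj _ (commute_groupAverage σ T)
      rw [← trace_mul_groupAverage (hcomm x) T, ← hy, ← map_mul, ← hB, hx]; rfl
    ext u
    rw [LinearMap.zero_apply, ← Module.forall_dual_apply_eq_zero_iff ℚ_[p]]
    intro f
    rw [← LinearMap.trace_smulRight f (ρ x u), ← h0 (f.smulRight u)]
    congr 1
    ext v
    simp
  let e : E ≃ₗ[ℚ_[p]] Module.Dual ℚ_[p] E :=
    LinearEquiv.ofInjectiveOfFinrankEq B hBinj Subspace.dual_finrank_eq.symm
  have he : ∀ x, e x = B x := fun _ => rfl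
  have : (LinearMap.mulLeft ℚ_[p] b).dualMap =
      (e : E →ₗ[ℚ_[p]] Module.Dual ℚ_[p] E) ∘ₗ LinearMap.mulRight ℚ_[p] b ∘ₗ
        (e.symm : Module.Dual ℚ_[p] E →ₗ[ℚ_[p]] E) := by
    rw [← LinearMap.comp_assoc]
    apply LinearMap.ext
    intro f
    obtain ⟨x, rfl⟩ := e.surjective f
    ext y
    simp only [LinearMap.comp_apply, LinearEquiv.coe_coe, e.symm_apply_apply]
    simp [he, hB, mul_assoc]
  rw [← LinearMap.det_dualMap, this, LinearMap.det_conj]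

end Averaging

/-! ### Maximal orders as stabilizers of lattices; regularity modulo `p` -/

/-- An endomorphism preserves a lattice if and only if its matrix in lattice coordinates is
integral. -/
theorem preserves_iff_toMatrix {p : ℕ} [Fact p.Prime] {V : Type*} [AddCommGroup V]
    [Module ℚ_[p] V] {M : Set V} {n : ℕ} {b : Module.Basis (Fin n) ℚ_[p] V}
    (hb : ∀ v, v ∈ M ↔ ∀ i, ‖b.repr v i‖ ≤ 1) (f : Module.End ℚ_[p] V) :
    (∀ v ∈ M, f v ∈ M) ↔ ∀ i j, ‖LinearMap.toMatrix b b f i j‖ ≤ 1 := by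
  constructor
  · intro h i j
    rw [LinearMap.toMatrix_apply]
    refine (hb _).1 (h _ ((hb _).2 fun i => ?_)) i
    rw [b.repr_self, Finsupp.single_apply]; split_ifs <;> simp
  · intro h v hv
    refine (hb _).2 fun i => ?_
    rw [← LinearMap.toMatrix_mulVec_repr b b f v, Matrix.mulVec, dotProduct]
    refine IsUltrametricDist.norm_sum_le_of_forall_le_of_nonneg (M := ℚ_[p]) zero_le_one
      fun j _ => ?_
    rw [norm_mul]
    exact mul_le_one₀ (h i j) (norm_nonneg _) ((hb v).1 hv j)

/-- Matrix algebras over fields are von Neumann regular. -/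
theorem matrix_exists_mul_mul_eq_self {K : Type*} [Field K] {n : ℕ}
    (A : Matrix (Fin n) (Fin n) K) : ∃ Z, A * Z * A = A := by
  let f := Matrix.toLin' A
  obtain ⟨h, hh⟩ := f.rangeRestrict.exists_rightInverse_of_surjective f.range_rangeRestrict
  obtain ⟨g, hg⟩ := LinearMap.exists_extend h
  refine ⟨LinearMap.toMatrix' g, ?_⟩
  apply Matrix.toLin'.injective
  rw [Matrix.toLin'_mul, Matrix.toLin'_mul, Matrix.toLin'_toMatrix']
  apply LinearMap.ext
  intro v
  have h1 : g (f v) = h (f.rangeRestrict v) := LinearMap.congr_fun hg (f.rangeRestrict v)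
  have h2 := congrArg Subtype.val (LinearMap.congr_fun hh (f.rangeRestrict v))
  change f (g (f v)) = f v
  rw [h1]
  exact h2

theorem padicInt_matrix_regular {p : ℕ} [Fact p.Prime] {n : ℕ} (Y : Matrix (Fin n) (Fin n) ℤ_[p]) :
    ∃ Z : Matrix (Fin n) (Fin n) ℤ_[p], ∀ i j, ‖(Y * Z * Y - Y) i j‖ ≤ (p : ℝ)⁻¹ := by
  let φ : ℤ_[p] →+* ZMod p := PadicInt.toZMod
  obtain ⟨Z₀, hZ₀⟩ := matrix_exists_mul_mul_eq_self (φ.mapMatrix Y)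
  have hφ : Function.Surjective φ := ZMod.ringHom_surjective φ
  let Z : Matrix (Fin n) (Fin n) ℤ_[p] := fun i j => (hφ (Z₀ i j)).choose
  have hZ : φ.mapMatrix Z = Z₀ := by
    ext i j; exact (hφ (Z₀ i j)).choose_spec
  refine ⟨Z, fun i j => ?_⟩
  have h0 : φ.mapMatrix (Y * Z * Y - Y) = 0 := by
    rw [map_sub, map_mul, map_mul, hZ, hZ₀, sub_self]
  have h1 : (Y * Z * Y - Y) i j ∈ RingHom.ker φ := congrFun (congrFun h0 i) j
  rw [PadicInt.ker_toZMod, PadicInt.maximalIdeal_eq_span_p] at h1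
  have := (PadicInt.norm_le_pow_iff_mem_span_pow _ 1).2 (by simpa using h1)
  simpa using this

section StableLattice
variable {p : ℕ} [Fact p.Prime] {E V G : Type*} [Ring E] [Algebra ℚ_[p] E]
  [Algebra ℤ_[p] E] [IsScalarTower ℤ_[p] ℚ_[p] E]
  [AddCommGroup V] [Module ℚ_[p] V] [Module ℤ_[p] V] [IsScalarTower ℤ_[p] ℚ_[p] V]
  [Group G] [Fintype G]

theorem padicInt_smul_eq (c : ℤ_[p]) (v : V) : c • v = (c : ℚ_[p]) • v := by
  rw [← algebraMap_smul ℚ_[p] c v]; rfl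

/-- A lattice of `V` stable under both `R` and `G`: the `R`-span of the `G`-orbits of a basis. -/
theorem exists_stable_lattice [FiniteDimensional ℚ_[p] V]
    {ρ : E →ₐ[ℚ_[p]] Module.End ℚ_[p] V} {σ : G →* Module.End ℚ_[p] V}
    (hcomm : ∀ x g, Commute (ρ x) (σ g)) {R : Subalgebra ℤ_[p] E}
    (hR : (Subalgebra.toSubmodule R).FG) :
    ∃ M : Submodule ℤ_[p] V, M.FG ∧ Submodule.span ℚ_[p] (M : Set V) = ⊤ ∧
      (∀ r ∈ R, ∀ v ∈ M, ρ r v ∈ M) ∧ ∀ g, ∀ v ∈ M, σ g v ∈ M := by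
  let b := Module.finBasis ℚ_[p] V
  let M₀ : Submodule ℤ_[p] V :=
    Submodule.span ℤ_[p] (Set.range fun x : G × Fin (Module.finrank ℚ_[p] V) => σ x.1 (b x.2))
  have hM₀ : M₀.FG := Submodule.fg_span (Set.finite_range _)
  have hM₀σ : ∀ g, ∀ v ∈ M₀, σ g v ∈ M₀ := by
    intro g v hv
    have : M₀ ≤ M₀.comap ((σ g).restrictScalars ℤ_[p]) := by
      refine Submodule.span_le.2 ?_
      rintro _ ⟨⟨h, i⟩, rfl⟩
      refine Submodule.subset_span ⟨(g * h, i), ?_⟩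
      simp
    exact this hv
  let B : E →ₗ[ℤ_[p]] V →ₗ[ℤ_[p]] V :=
    LinearMap.mk₂ ℤ_[p] (fun x v => ρ x v) (fun x y v => by simp)
      (fun c x v => by
        rw [padicInt_smul_eq, padicInt_smul_eq, map_smul]; rfl)
      (fun x v w => by simp) (fun c x v => by
        rw [padicInt_smul_eq, padicInt_smul_eq, map_smul])
  have hB : ∀ x v, B x v = ρ x v := fun _ _ => rfl
  let M := Submodule.map₂ B (Subalgebra.toSubmodule R) M₀
  refine ⟨M, hR.map₂ B hM₀, ?_, ?_, ?_⟩
  · rw [eq_top_iff, ← b.span_eq]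
    refine Submodule.span_mono ?_
    rintro _ ⟨i, rfl⟩
    have h1 : b i ∈ M₀ := Submodule.subset_span ⟨(1, i), by simp⟩
    have := Submodule.apply_mem_map₂ B (p := Subalgebra.toSubmodule R) R.one_mem h1
    rw [hB, map_one] at this
    exact this
  · intro r hr v hv
    have : M ≤ M.comap (B r) := by
      refine Submodule.map₂_le.2 fun x hx v hv => ?_
      have := Submodule.apply_mem_map₂ B (p := Subalgebra.toSubmodule R) (R.mul_mem hr hx) hv
      rw [hB, map_mul] at this
      exact this
    exact this hv
  · intro g v hv
    have : M ≤ M.comap ((σ g).restrictScalars ℤ_[p]) := by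
      refine Submodule.map₂_le.2 fun x hx v hv => ?_
      have := Submodule.apply_mem_map₂ B (p := Subalgebra.toSubmodule R) hx (hM₀σ g v hv)
      rw [hB, ← Module.End.mul_apply, (hcomm x g).eq] at this
      exact this
    exact this hv

/-- The stabilizer in `E` of an `R`-stable lattice is an order containing `R`, hence equals `R` when
`R` is maximal. -/
theorem mem_of_preserves_lattice
    {ρ : E →ₐ[ℚ_[p]] Module.End ℚ_[p] V} (hinj : Function.Injective ρ)
    {R : Subalgebra ℤ_[p] E} (hR : IsOrderZp p E R)
    (hRmax : ∀ R' : Subalgebra ℤ_[p] E, IsOrderZp p E R' → R ≤ R' → R' = R)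
    {M : Submodule ℤ_[p] V} (hM : M.FG) (hspan : Submodule.span ℚ_[p] (M : Set V) = ⊤)
    (hRM : ∀ r ∈ R, ∀ v ∈ M, ρ r v ∈ M) {x : E} (hx : ∀ v ∈ M, ρ x v ∈ M) : x ∈ R := by
  obtain ⟨n, b, hb⟩ := exists_latticeBasis hM hspan
  have hbM : ∀ i, b i ∈ M := fun j => (hb _).2 fun i => by
    rw [b.repr_self, Finsupp.single_apply]; split_ifs <;> simp
  let R' : Subalgebra ℤ_[p] E :=
    { carrier := {x | ∀ v ∈ M, ρ x v ∈ M}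
      mul_mem' := fun {x y} hx hy v hv => by
        rw [map_mul]; exact hx _ (hy v hv)
      add_mem' := fun {x y} hx hy v hv => by
        rw [map_add]; exact M.add_mem (hx v hv) (hy v hv)
      algebraMap_mem' := fun c v hv => by
        rw [Algebra.algebraMap_eq_smul_one, padicInt_smul_eq, map_smul, map_one,
          LinearMap.smul_apply, ← padicInt_smul_eq]
        exact M.smul_mem c hv }
  have hle : R ≤ R' := fun r hr => hRM r hr
  have hfin : Module.Finite ℤ_[p] M := Module.Finite.iff_fg.2 hM
  let f : Subalgebra.toSubmodule R' →ₗ[ℤ_[p]] (Fin n → M) :=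
    { toFun := fun x i => ⟨ρ x (b i), x.2 _ (hbM i)⟩
      map_add' := fun x y => by ext i; simp
      map_smul' := fun c x => by
        ext i
        simp [padicInt_smul_eq] }
  have hf : Function.Injective f := by
    rw [injective_iff_map_eq_zero]
    intro x hx
    have : ρ x = ρ 0 := by
      rw [map_zero]
      exact b.ext fun i => congrArg Subtype.val (congrFun hx i)
    exact Subtype.ext (hinj this)
  have hR' : IsOrderZp p E R' := by
    refine ⟨Module.Finite.iff_fg.1 (Module.Finite.of_injective f hf), ?_⟩
    rw [eq_top_iff, ← hR.2]
    exact Submodule.span_mono hle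
  rw [← hRmax R' hR' hle]
  exact hx

/-- If `E` is the commutant of a finite group of order prime to `p`, a maximal order `R` of `E` is
von Neumann regular modulo `p`. With `M` a lattice stable under `R` and `G`, a quasi-inverse of `y`
modulo `p` exists in `End(M)`; its average over `G` is still integral, commutes with `G`, and so lies
in the stabilizer of `M`, which is `R`. -/
theorem order_regular_mod_p [FiniteDimensional ℚ_[p] V]
    {ρ : E →ₐ[ℚ_[p]] Module.End ℚ_[p] V} (hinj : Function.Injective ρ)
    {σ : G →* Module.End ℚ_[p] V} (hcomm : ∀ x g, Commute (ρ x) (σ g))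
    (hsurj : ∀ f : Module.End ℚ_[p] V, (∀ g, Commute f (σ g)) → ∃ x, ρ x = f)
    (hcard : ¬ p ∣ Fintype.card G)
    {R : Subalgebra ℤ_[p] E} (hR : IsOrderZp p E R)
    (hRmax : ∀ R' : Subalgebra ℤ_[p] E, IsOrderZp p E R' → R ≤ R' → R' = R) :
    ∀ y ∈ R, ∃ z ∈ R, ∃ w ∈ R, y * z * y - y = (p : ℚ_[p]) • w := by
  intro y hy
  have hp0 : (p : ℚ_[p]) ≠ 0 := by exact_mod_cast (Fact.out : p.Prime).ne_zero
  have hpr : (0 : ℝ) < p := by exact_mod_cast (Fact.out : p.Prime).pos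
  obtain ⟨M, hM, hspan, hRM, hGM⟩ := exists_stable_lattice hcomm hR.1
  obtain ⟨n, b, hb⟩ := exists_latticeBasis hM hspan
  have hmem : ∀ x, (∀ v ∈ M, ρ x v ∈ M) → x ∈ R := fun x =>
    mem_of_preserves_lattice hinj hR hRmax hM hspan hRM
  have hcardn : ‖(Fintype.card G : ℚ_[p])⁻¹‖ ≤ 1 := by
    rw [norm_inv, Padic.norm_natCast_eq_one_iff.2
      (((Fact.out : p.Prime).coprime_iff_not_dvd).2 hcard), inv_one]
  have havg : ∀ T : Module.End ℚ_[p] V, (∀ v ∈ M, T v ∈ M) → ∀ v ∈ M, groupAverage σ T v ∈ M := by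
    intro T hT v hv
    unfold groupAverage
    rw [LinearMap.smul_apply, LinearMap.sum_apply]
    exact smul_mem_of_norm_le_one (M := (M : Set V)) hb hcardn
      (M.sum_mem fun g _ => hGM _ _ (hT _ (hGM _ _ hv)))
  have hpre := preserves_iff_toMatrix (M := (M : Set V)) hb
  let φ : ℤ_[p] →+* ℚ_[p] := algebraMap ℤ_[p] ℚ_[p]
  let Y : Matrix (Fin n) (Fin n) ℤ_[p] :=
    fun i j => ⟨LinearMap.toMatrix b b (ρ y) i j, (hpre _).1 (hRM y hy) i j⟩
  have hY : LinearMap.toMatrix b b (ρ y) = φ.mapMatrix Y := rfl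
  obtain ⟨Z, hZ⟩ := padicInt_matrix_regular Y
  let T : Module.End ℚ_[p] V := Matrix.toLin b b (φ.mapMatrix Z)
  have hT : LinearMap.toMatrix b b T = φ.mapMatrix Z := LinearMap.toMatrix_toLin _ _ _
  let N : Module.End ℚ_[p] V := ρ y * T * ρ y - ρ y
  have hN : LinearMap.toMatrix b b N = φ.mapMatrix (Y * Z * Y - Y) := by
    simp only [N, map_sub, map_mul, LinearMap.toMatrix_mul, hT, hY]
  obtain ⟨z, hz⟩ := hsurj _ (commute_groupAverage σ T)
  obtain ⟨w, hw⟩ := hsurj _ (commute_groupAverage σ ((p : ℚ_[p])⁻¹ • N))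
  refine ⟨z, hmem z ?_, w, hmem w ?_, ?_⟩
  · rw [hz]
    refine havg T ((hpre T).2 fun i j => ?_)
    rw [hT]; exact PadicInt.norm_le_one (Z i j)
  · rw [hw]
    refine havg _ ((hpre _).2 fun i j => ?_)
    rw [map_smul, hN, Matrix.smul_apply, smul_eq_mul, norm_mul, norm_inv, Padic.norm_p, inv_inv]
    rw [← le_inv_mul_iff₀ hpr, mul_one]
    exact hZ i j
  · apply hinj
    rw [map_smul, hw, groupAverage_smul, smul_inv_smul₀ hp0, groupAverage_sub,
      groupAverage_mul_mul (hcomm y) (hcomm y), groupAverage_of_commute (hcomm y), ← hz]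
    simp
end StableLattice

/-! ### Split algebras with unramified centre as commutants of finite groups -/

section SplitRepresentation
variable {p : ℕ} [Fact p.Prime] {n : ℕ} {K : Fin n → Type} [∀ i, Field (K i)]
  [∀ i, Algebra ℚ_[p] (K i)]

/-- The action of `∏ M_{d i}(K i)` on the space of column vectors `∏ (K i) ^ (d i)`. -/
noncomputable def columnAction (p : ℕ) [Fact p.Prime] {n : ℕ} (K : Fin n → Type) [∀ i, Field (K i)]
    [∀ i, Algebra ℚ_[p] (K i)] (d : Fin n → ℕ) :
    (∀ i, Matrix (Fin (d i)) (Fin (d i)) (K i)) →ₐ[ℚ_[p]]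
      Module.End ℚ_[p] (∀ i, Fin (d i) → K i) :=
  AlgHom.ofLinearMap
    { toFun := fun x =>
        { toFun := fun v i => (x i).mulVec (v i)
          map_add' := fun v w => funext fun i => Matrix.mulVec_add (x i) (v i) (w i)
          map_smul' := fun c v => funext fun i => Matrix.mulVec_smul (x i) c (v i) }
      map_add' := fun x y => LinearMap.ext fun v => funext fun i =>
        Matrix.add_mulVec (x i) (y i) (v i)
      map_smul' := fun c x => LinearMap.ext fun v => funext fun i =>
        Matrix.smul_mulVec c (x i) (v i) }
    (LinearMap.ext fun _ => funext fun _ => Matrix.one_mulVec _)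
    (fun x y => LinearMap.ext fun v => funext fun i =>
      (Matrix.mulVec_mulVec (v i) (x i) (y i)).symm)

theorem columnAction_apply (d : Fin n → ℕ) (x : ∀ i, Matrix (Fin (d i)) (Fin (d i)) (K i))
    (v : ∀ i, Fin (d i) → K i) (i : Fin n) :
    columnAction p K d x v i = (x i).mulVec (v i) := rfl

theorem columnAction_injective (d : Fin n → ℕ) : Function.Injective (columnAction p K d) := by
  classical
  intro x y h
  funext i
  apply Matrix.toLin'.injective
  apply LinearMap.ext
  intro w
  have := congrFun (LinearMap.congr_fun h (Pi.single i w)) i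
  simpa [columnAction_apply] using this

/-- The action of `∏ μ_{k i}(K i)` on the space of column vectors `∏ (K i) ^ (d i)`, the `i`-th root
of unity acting by scalars on the `i`-th factor. -/
noncomputable def scalarAction (p : ℕ) [Fact p.Prime] {n : ℕ} (K : Fin n → Type) [∀ i, Field (K i)]
    [∀ i, Algebra ℚ_[p] (K i)] (d k : Fin n → ℕ) :
    (∀ i, rootsOfUnity (k i) (K i)) →* Module.End ℚ_[p] (∀ i, Fin (d i) → K i) where
  toFun g :=
    { toFun := fun v i => ((g i : (K i)ˣ) : K i) • v i
      map_add' := fun v w => funext fun i => smul_add _ _ _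
      map_smul' := fun c v => funext fun i => smul_comm ((g i : (K i)ˣ) : K i) c (v i) }
  map_one' := LinearMap.ext fun v => funext fun i => one_smul _ _
  map_mul' g h := LinearMap.ext fun v => funext fun i => by
    simp [mul_smul]

theorem scalarAction_apply (d k : Fin n → ℕ) (g : ∀ i, rootsOfUnity (k i) (K i))
    (v : ∀ i, Fin (d i) → K i) (i : Fin n) :
    scalarAction p K d k g v i = ((g i : (K i)ˣ) : K i) • v i := rfl

theorem commute_columnAction_scalarAction (d k : Fin n → ℕ)
    (x : ∀ i, Matrix (Fin (d i)) (Fin (d i)) (K i)) (g : ∀ i, rootsOfUnity (k i) (K i)) :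
    Commute (columnAction p K d x) (scalarAction p K d k g) := by
  refine LinearMap.ext fun v => funext fun i => ?_
  simp only [Module.End.mul_apply, columnAction_apply, scalarAction_apply, Matrix.mulVec_smul]

/-- An endomorphism `f` commuting with the group `∏ μ_{k i}(K i)` comes from a tuple of matrices.
The `k i` being even, the group contains a sign on each factor, so `f` preserves the factors; since
`K i` is generated by a root of unity of the group, `f` is `K i`-linear on the `i`-th one. -/
theorem exists_columnAction_eq (d k : Fin n → ℕ) (hk : ∀ i, Even (k i))
    (x : ∀ i, K i) (hx : ∀ i, x i ^ k i = 1) (hk0 : ∀ i, k i ≠ 0)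
    (hadj : ∀ i, Algebra.adjoin ℚ_[p] {x i} = ⊤)
    (f : Module.End ℚ_[p] (∀ i, Fin (d i) → K i))
    (hf : ∀ g, Commute f (scalarAction p K d k g)) :
    ∃ A, columnAction p K d A = f := by
  classical
  have hroot : ∀ i (c : K i), c ^ k i = 1 → ∃ g : rootsOfUnity (k i) (K i),
      ((g : (K i)ˣ) : K i) = c := fun i c hc =>
    ⟨⟨Units.ofPowEqOne c (k i) hc (hk0 i), by
      rw [mem_rootsOfUnity]; ext; simp⟩, rfl⟩
  have hact : ∀ i (c : K i), c ^ k i = 1 → ∃ g, ∀ v : (∀ i, Fin (d i) → K i),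
      scalarAction p K d k g v = Function.update v i (c • v i) := by
    intro i c hc
    obtain ⟨g, hg⟩ := hroot i c hc
    refine ⟨Function.update 1 i g, fun v => funext fun j => ?_⟩
    rw [scalarAction_apply]
    by_cases h : j = i
    · subst h; simp [hg]
    · simp [h]
  have hproj : ∀ i v, f v i = f (Pi.single i (v i)) i := by
    intro i v
    obtain ⟨g, hg⟩ := hact i (-1) ((hk i).neg_one_pow)
    have h1 : f (scalarAction p K d k g v) = scalarAction p K d k g (f v) :=
      LinearMap.congr_fun (hf g).eq v
    have h2 : scalarAction p K d k g v =
        v - (2 : ℚ_[p]) • (Pi.single i (v i) : ∀ i, Fin (d i) → K i) := by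
      rw [hg]
      funext j
      by_cases h : j = i
      · subst h
        simp [two_smul]
      · simp [h]
    rw [h2, map_sub, map_smul, hg] at h1
    have h3 := congrFun h1 i
    rw [Function.update_self, Pi.sub_apply, Pi.smul_apply, neg_one_smul, two_smul] at h3
    have h4 : (2 : ℚ_[p]) • (f v i) = (2 : ℚ_[p]) • f (Pi.single i (v i)) i := by
      rw [two_smul, two_smul]
      linear_combination (exp := 1) h3
    exact smul_right_injective _ (two_ne_zero : (2 : ℚ_[p]) ≠ 0) h4
  have hlin : ∀ i (c : K i) (w : Fin (d i) → K i),
      f (Pi.single i (c • w)) i = c • f (Pi.single i w) i := by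
    intro i
    let S : Subalgebra ℚ_[p] (K i) :=
      { carrier := {c | ∀ w : Fin (d i) → K i,
          f (Pi.single i (c • w)) i = c • f (Pi.single i w) i}
        mul_mem' := fun {a b} ha hb w => by rw [mul_smul, ha, hb, mul_smul]
        add_mem' := fun {a b} ha hb w => by
          rw [add_smul, Pi.single_add, map_add, Pi.add_apply, ha, hb, add_smul]
        algebraMap_mem' := fun r w => by
          rw [algebraMap_smul, algebraMap_smul, Pi.single_smul, map_smul, Pi.smul_apply] }
    have hS : S = ⊤ := by
      rw [eq_top_iff, ← hadj i]
      refine Algebra.adjoin_le (Set.singleton_subset_iff.2 fun w => ?_)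
      obtain ⟨g, hg⟩ := hact i (x i) (hx i)
      have h1 : f (scalarAction p K d k g (Pi.single i w)) =
        scalarAction p K d k g (f (Pi.single i w)) := LinearMap.congr_fun (hf g).eq _
      rw [hg, hg] at h1
      have h2 := congrFun h1 i
      rw [Function.update_self] at h2
      rw [← h2, Pi.single_eq_same]
      simp only [Pi.single, Function.update_idem]
    intro c w
    have : c ∈ S := hS ▸ Algebra.mem_top
    exact this w
  let F : ∀ i, (Fin (d i) → K i) →ₗ[K i] (Fin (d i) → K i) := fun i =>
    { toFun := fun w => f (Pi.single i w) i
      map_add' := fun v w => by rw [Pi.single_add, map_add, Pi.add_apply]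
      map_smul' := fun c w => hlin i c w }
  refine ⟨fun i => LinearMap.toMatrix' (F i), LinearMap.ext fun v => funext fun i => ?_⟩
  rw [columnAction_apply, LinearMap.toMatrix'_mulVec, hproj i v]
  rfl

/-- A split algebra with unramified centre is the full commutant of a finite group of order prime
to `p`, for `p` odd. If `K i` is generated by a root of unity of order `m i` prime to `p`, the group is
`∏ μ_{2 m i}(K i)`, acting on the column vectors. -/
theorem exists_finite_commutant {E : Type*} [Ring E] [Algebra ℚ_[p] E] (hodd : p ≠ 2)
    (S : UnramifiedSplitting p E) :
    ∃ (V G : Type) (_ : AddCommGroup V) (_ : Module ℚ_[p] V) (_ : FiniteDimensional ℚ_[p] V)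
      (_ : Group G) (_ : Fintype G) (ρ : E →ₐ[ℚ_[p]] Module.End ℚ_[p] V)
      (σ : G →* Module.End ℚ_[p] V), Function.Injective ρ ∧ (∀ x g, Commute (ρ x) (σ g)) ∧
      (∀ f : Module.End ℚ_[p] V, (∀ g, Commute f (σ g)) → ∃ x, ρ x = f) ∧
      ¬ p ∣ Fintype.card G := by
  have hp : p.Prime := Fact.out
  let _ := S.fieldK
  let _ := S.algK
  have _ := S.finK
  choose m x hm hpm hx hadj using S.unramK
  have hk0 : ∀ i, 2 * m i ≠ 0 := fun i => by have := hm i; omega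
  have _ : ∀ i, NeZero (2 * m i) := fun i => ⟨hk0 i⟩
  refine ⟨∀ i, Fin (S.d i) → S.K i, ∀ i, rootsOfUnity (2 * m i) (S.K i), inferInstance,
    inferInstance, inferInstance, inferInstance, Fintype.ofFinite _,
    (columnAction p S.K S.d).comp S.equiv.toAlgHom,
    scalarAction p S.K S.d _, ?_, ?_, ?_, ?_⟩
  · exact (columnAction_injective S.d).comp S.equiv.injective
  · exact fun y g => commute_columnAction_scalarAction _ _ _ g
  · intro f hf
    obtain ⟨A, hA⟩ := exists_columnAction_eq S.d (fun i => 2 * m i) (fun i => even_two_mul _) x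
      (fun i => by rw [mul_comm, pow_mul, (hx i).pow_eq_one, one_pow]) hk0 hadj f hf
    exact ⟨S.equiv.symm A, by simpa using hA⟩
  · intro hdvd
    obtain ⟨g, hg⟩ := @exists_prime_orderOf_dvd_card _ _ (Fintype.ofFinite _) p _ hdvd
    have h1 : g ^ (∏ i, 2 * m i) = 1 := by
      funext i
      obtain ⟨c, hc⟩ := Finset.dvd_prod_of_mem (fun i => 2 * m i) (Finset.mem_univ i)
      rw [Pi.pow_apply, hc, pow_mul]
      have : (g i) ^ (2 * m i) = 1 := Subtype.ext ((mem_rootsOfUnity _ _).1 (g i).2)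
      rw [this, one_pow, Pi.one_apply]
    have h2 := orderOf_dvd_of_pow_eq_one h1
    rw [hg, hp.prime.dvd_finsetProd_iff] at h2
    obtain ⟨i, -, hi⟩ := h2
    rcases hp.dvd_mul.1 hi with h | h
    · exact hodd ((Nat.prime_dvd_prime_iff_eq hp Nat.prime_two).1 h)
    · exact hpm i h
end SplitRepresentation

/-! ### The local degree bound -/

section Assembly
variable {p : ℕ} [Fact p.Prime]

theorem exists_pow_smul_mem {V : Type*} [AddCommGroup V] [Module ℚ_[p] V] {M : Set V}
    {n : ℕ} {b : Module.Basis (Fin n) ℚ_[p] V}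
    (hb : ∀ v, v ∈ M ↔ ∀ i, ‖b.repr v i‖ ≤ 1) (v : V) : ∃ N : ℕ, (p : ℚ_[p]) ^ N • v ∈ M := by
  have hp1 : (1 : ℝ) < p := by exact_mod_cast (Fact.out : p.Prime).one_lt
  have hp0 : (0 : ℝ) < p := zero_lt_one.trans hp1
  obtain ⟨N, hN⟩ := pow_unbounded_of_one_lt (∑ i, ‖b.repr v i‖) hp1
  refine ⟨N, (hb _).2 fun i => ?_⟩
  simp only [map_smul, Finsupp.smul_apply, smul_eq_mul, norm_mul, norm_pow, Padic.norm_p]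
  rw [inv_pow, inv_mul_le_iff₀ (by positivity), mul_one]
  exact (Finset.single_le_sum (f := fun i => ‖b.repr v i‖) (fun i _ => norm_nonneg _)
    (Finset.mem_univ i)).trans hN.le

/-- Scaling `m` by the square of a power of `p` places its valuation at `v(δ)` or `v(δ) + 1`. As `δ`
is integral, the norm is then at least `‖δ‖ ^ 2`, except in the second case when `δ` is a unit. -/
theorem exists_zpow_norm_mul_sq {m δ : ℚ_[p]} (hm : m ≠ 0) (hδ : δ ≠ 0) (hδ1 : ‖δ‖ ≤ 1) :
    ∃ s : ℚ_[p], s ≠ 0 ∧ ‖s * s * m‖ ≤ ‖δ‖ ∧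
      (‖δ‖ ^ 2 ≤ ‖s * s * m‖ ∨ ‖δ‖ = 1 ∧ ‖s * s * m‖ = (p : ℝ)⁻¹) := by
  have hp0 : (p : ℚ_[p]) ≠ 0 := by exact_mod_cast (Fact.out : p.Prime).ne_zero
  have hp1 : (1 : ℝ) < p := by exact_mod_cast (Fact.out : p.Prime).one_lt
  have hpr : (p : ℝ) ≠ 0 := by positivity
  set k : ℤ := (δ.valuation - m.valuation + 1) / 2 with hk
  have hn : ‖(p : ℚ_[p]) ^ k * (p : ℚ_[p]) ^ k * m‖ = (p : ℝ) ^ (-(m.valuation + 2 * k)) := by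
    rw [norm_mul, norm_mul, norm_zpow, Padic.norm_p, Padic.norm_eq_zpow_neg_valuation hm,
      inv_zpow', ← zpow_add₀ hpr, ← zpow_add₀ hpr]
    congr 1; ring
  have hd := Padic.norm_eq_zpow_neg_valuation hδ
  have hv : 0 ≤ δ.valuation := by
    rw [hd, ← zpow_zero (p : ℝ), zpow_le_zpow_iff_right₀ hp1] at hδ1
    omega
  refine ⟨(p : ℚ_[p]) ^ k, zpow_ne_zero _ hp0, ?_, ?_⟩
  · rw [hn, hd, zpow_le_zpow_iff_right₀ hp1]; omega
  · rw [hn, hd, ← zpow_natCast, ← zpow_mul, zpow_le_zpow_iff_right₀ hp1]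
    by_cases h : m.valuation + 2 * k ≤ 2 * δ.valuation
    · left; push_cast; omega
    · right
      have h1 : δ.valuation = 0 := by omega
      have h2 : m.valuation + 2 * k = 1 := by omega
      rw [h1, h2]; simp

end Assembly

/-- **The local degree bound with constant 1 at split unramified primes**
(regular-representation instance): if `p` is odd, `E` is split with centre a product of
unramified extensions of `ℚ_p`, and `R` is a `†`-stable maximal order, then for every
`q ∈ R` with `a† q a ∈ ℚ_p^×` solvable there is `b ∈ R` with `b† q b ∈ ℤ_p \ {0}` and
`|det L_q|_p^{2d-1} ≤ |det L_b|_p²`, where `d = dim_{ℚ_p} E`. -/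
theorem arith_bound_local_split
    (p : ℕ) [Fact p.Prime] (hodd : p ≠ 2)
    (E : Type*) [Ring E] [Nontrivial E] [Algebra ℚ_[p] E] [FiniteDimensional ℚ_[p] E]
    [IsSemisimpleRing E]
    [Algebra ℤ_[p] E] [IsScalarTower ℤ_[p] ℚ_[p] E]
    (dag : E → E) (hdag : IsInvolutionQp p E dag)
    -- `E` is split with unramified centre
    (hsplit : Nonempty (UnramifiedSplitting p E))
    -- `R` is a `†`-stable maximal order in `E`
    (R : Subalgebra ℤ_[p] E) (hR : IsOrderZp p E R)
    (hRmax : ∀ R' : Subalgebra ℤ_[p] E, IsOrderZp p E R' → R ≤ R' → R' = R)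
    (hRdag : ∀ x ∈ R, dag x ∈ R) :
    ∀ q ∈ R,
      (∃ (a : E) (m : ℚ_[p]), m ≠ 0 ∧ dag a * q * a = algebraMap ℚ_[p] E m) →
      ∃ b ∈ R, (∃ n : ℤ_[p], n ≠ 0 ∧ dag b * q * b = algebraMap ℚ_[p] E (n : ℚ_[p])) ∧
        ‖LinearMap.det (LinearMap.mulLeft ℚ_[p] q)‖ ^ (2 * Module.finrank ℚ_[p] E - 1) ≤
          ‖LinearMap.det (LinearMap.mulLeft ℚ_[p] b)‖ ^ 2 := by
  intro q hq ⟨a, m, hm, ha⟩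
  obtain ⟨hadd, hmul, hinv, hfix⟩ := hdag
  have hp0 : (p : ℚ_[p]) ≠ 0 := by exact_mod_cast (Fact.out : p.Prime).ne_zero
  let _ : StarRing E :=
    { star := dag, star_involutive := hinv, star_mul := hmul, star_add := hadd }
  have hstar : ∀ (r : ℚ_[p]) (x : E), star (r • x) = r • star x := fun r x => by
    rw [Algebra.smul_def, star_mul, show star (algebraMap ℚ_[p] E r) = _ from hfix r,
      ← Algebra.commutes, ← Algebra.smul_def]
  -- The algebra as the commutant of a finite group of order prime to `p`.
  obtain ⟨S⟩ := hsplit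
  obtain ⟨V, G, _, _, _, _, _, ρ, σ, hinj, hcomm, hsurj, hcard⟩ := exists_finite_commutant hodd S
  let _ : Module ℤ_[p] V := Module.compHom V (algebraMap ℤ_[p] ℚ_[p])
  have _ : IsScalarTower ℤ_[p] ℚ_[p] V := ⟨fun c r v => by
    rw [Algebra.smul_def, mul_smul]; rfl⟩
  have hreg := order_regular_mod_p hinj hcomm hsurj hcard hR hRmax
  obtain ⟨N, B, hB⟩ := exists_latticeBasis hR.1 hR.2
  let R₀ : Subring E := R.toSubring
  have hB₀ : ∀ v, v ∈ (R₀ : Set E) ↔ ∀ i, ‖B.repr v i‖ ≤ 1 := hB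
  have hsmul : ∀ c : ℚ_[p], ‖c‖ ≤ 1 → ∀ x ∈ R₀, c • x ∈ R₀ := fun c hc x hx =>
    smul_mem_of_norm_le_one hB₀ hc hx
  have hlift : HasHyperbolicLifts R₀ (p : ℚ_[p]) :=
    hasHyperbolicLifts_of_basis hodd hB₀ hRdag hreg
  -- Multiplicativity and `†`-invariance of `det L`.
  let D : E → ℚ_[p] := fun x => LinearMap.det (LinearMap.mulLeft ℚ_[p] x)
  have hDmul : ∀ x y, D (x * y) = D x * D y := fun x y => by
    simp only [D, LinearMap.mulLeft_mul, LinearMap.det_comp]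
  have hDsmul : ∀ c : ℚ_[p], D (c • 1) = c ^ Module.finrank ℚ_[p] E := fun c => by
    have : LinearMap.mulLeft ℚ_[p] (c • (1 : E)) = c • LinearMap.id := by ext; simp
    simp only [D, this, LinearMap.det_smul, LinearMap.det_id, mul_one]
  have hDstar : ∀ x, D (star x) = D x := fun x => by
    let e : E ≃ₗ[ℚ_[p]] E :=
      { toFun := star, map_add' := star_add, map_smul' := hstar, invFun := star,
        left_inv := star_star, right_inv := star_star }
    have : LinearMap.mulLeft ℚ_[p] (star x) =
        (e : E →ₗ[ℚ_[p]] E) ∘ₗ LinearMap.mulRight ℚ_[p] x ∘ₗ (e.symm : E →ₗ[ℚ_[p]] E) := by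
      apply LinearMap.ext
      intro y
      change star x * y = star (star y * x)
      simp
    simp only [D]
    rw [this, LinearMap.det_conj, ← det_mulLeft_eq_det_mulRight hinj hcomm hsurj]
  set δ : ℚ_[p] := D q with hδdef
  have hDb : ∀ (b : E) (n : ℚ_[p]), star b * q * b = n • 1 →
      D b ^ 2 * δ = n ^ Module.finrank ℚ_[p] E := fun b n h => by
    rw [← hDsmul, ← h, hDmul, hDmul, hDstar]; ring
  have hδ : δ ≠ 0 := by
    have h := hDb a m (by rw [← Algebra.algebraMap_eq_smul_one]; exact ha)
    intro h0
    rw [h0, mul_zero] at h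
    exact pow_ne_zero _ hm h.symm
  have finish : ∀ (b : E) (n : ℚ_[p]), b ∈ R₀ → star b * q * b = n • 1 → ‖n‖ ≤ 1 →
      ‖δ‖ ^ 2 ≤ ‖n‖ →
      ∃ b ∈ R, (∃ n : ℤ_[p], n ≠ 0 ∧ dag b * q * b = algebraMap ℚ_[p] E (n : ℚ_[p])) ∧
        ‖LinearMap.det (LinearMap.mulLeft ℚ_[p] q)‖ ^ (2 * Module.finrank ℚ_[p] E - 1) ≤
          ‖LinearMap.det (LinearMap.mulLeft ℚ_[p] b)‖ ^ 2 := by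
    intro b n hb h hn hδn
    have hδpos : 0 < ‖δ‖ := norm_pos_iff.2 hδ
    have hn0 : n ≠ 0 := norm_pos_iff.1 ((pow_pos hδpos 2).trans_le hδn)
    refine ⟨b, hb, ⟨⟨n, hn⟩, fun h0 => hn0 (congrArg Subtype.val h0), ?_⟩, ?_⟩
    · rw [Algebra.algebraMap_eq_smul_one]; exact h
    · have hd : 0 < Module.finrank ℚ_[p] E := Module.finrank_pos
      refine le_of_mul_le_mul_right ?_ hδpos
      change ‖δ‖ ^ _ * ‖δ‖ ≤ ‖D b‖ ^ 2 * ‖δ‖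
      rw [← norm_pow (D b), ← norm_mul, hDb b n h, norm_pow, ← pow_succ,
        show 2 * Module.finrank ℚ_[p] E - 1 + 1 = 2 * Module.finrank ℚ_[p] E by omega, pow_mul]
      exact pow_le_pow_left₀ (by positivity) hδn _
  obtain ⟨hδ1, w, hw, hqw⟩ := exists_mul_eq_det_smul_one hB₀ hq
  change ‖δ‖ ≤ 1 at hδ1
  change q * w = δ • 1 at hqw
  have haq : star a * q * a = m • 1 := by rw [← Algebra.algebraMap_eq_smul_one]; exact ha
  have haaq : a * star a * q = m • 1 := by
    have h1 : (m⁻¹ • (star a * q)) * a = 1 := by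
      rw [smul_mul_assoc, haq, inv_smul_smul₀ hm]
    have h2 := mul_eq_one_comm.1 h1
    rw [mul_smul_comm, ← mul_assoc, inv_smul_eq_iff₀ hm] at h2
    exact h2
  have haa : a * star a = (m / δ) • w := by
    have h1 : δ • (a * star a) = m • w := by
      have := congrArg (· * w) haaq
      simpa only [mul_assoc, hqw, mul_smul_comm, mul_one, smul_mul_assoc, one_mul] using this
    rw [div_eq_inv_mul, mul_smul, ← h1, inv_smul_smul₀ hδ]
  obtain ⟨s, hs, hsle, hcase⟩ := exists_zpow_norm_mul_sq hm hδ hδ1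
  set n : ℚ_[p] := s * s * m with hn
  -- `x = s a†` satisfies `x† x ∈ R`, hence can be moved into `R` by an isometry `u`.
  have hxx : star (s • star a) * (s • star a) = (n / δ) • w := by
    rw [hstar, star_star, smul_mul_smul_comm, haa, smul_smul, hn, mul_div_assoc]
  have hxxR : star (s • star a) * (s • star a) ∈ R₀ := by
    rw [hxx]
    refine hsmul _ ?_ _ hw
    rw [norm_div]
    exact div_le_one_of_le₀ hsle (norm_nonneg _)
  obtain ⟨k, hk⟩ := exists_pow_smul_mem hB₀ (s • star a)
  obtain ⟨u, hu1, hu2, hux⟩ := exists_isometry_mul_mem hp0 hstar hRdag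
    (hsmul _ Padic.norm_p_lt_one.le) hlift k _ hk hxxR
  have hbR : star (u * (s • star a)) ∈ R₀ := hRdag _ hux
  have hbq : star (star (u * (s • star a))) * q * star (u * (s • star a)) = n • 1 := by
    rw [star_star, star_mul, hstar, star_star]
    calc u * s • star a * q * (s • a * star u)
        = (s * s) • (u * (star a * q * a) * star u) := by
          simp only [mul_smul_comm, smul_mul_assoc, smul_smul, mul_assoc]
      _ = n • 1 := by
          rw [haq, mul_smul_comm, mul_one, smul_mul_assoc, hu2, smul_smul]
  rcases hcase with hcase | ⟨hδ1', hnp⟩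
  · exact finish _ n hbR hbq (hsle.trans hδ1) hcase
  · -- Here `q` is a unit of `R` and `n` is `p` times the unit `ν`.
    have hpn : ‖n / p‖ = 1 := by
      rw [norm_div, hnp, Padic.norm_p, div_self]
      exact inv_ne_zero (by exact_mod_cast (Fact.out : p.Prime).ne_zero)
    have hν : n / p ≠ 0 := norm_ne_zero_iff.1 (by rw [hpn]; exact one_ne_zero)
    have hpν : (p : ℚ_[p]) * (n / p) = n := mul_div_cancel₀ n hp0
    have hbbq : star (u * (s • star a)) * star (star (u * (s • star a))) * q = n • 1 := by
      rw [star_star, star_mul, hstar, star_star]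
      calc s • a * star u * (u * s • star a) * q
          = (s * s) • (a * (star u * u) * star a * q) := by
            simp only [mul_smul_comm, smul_mul_assoc, smul_smul, mul_assoc]
        _ = n • 1 := by rw [hu1, mul_one, haaq, smul_smul]
    obtain ⟨b', hb', hb'q⟩ := exists_unit_similitude hp0 hν hstar hRdag (hsmul _ hpn.le)
      (hsmul _ (by rw [norm_inv, hpn, inv_one]))
      (fun x _ hx h => idempotent_eq_zero_of_basis hB₀ hx h) hlift hq
      (hsmul δ⁻¹ (by rw [norm_inv, hδ1', inv_one]) _ hw)
      (by rw [mul_smul_comm, hqw, inv_smul_smul₀ hδ]) hbR (by rw [hpν]; exact hbq)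
      (by rw [hpν]; exact hbbq)
    exact finish b' _ hb' hb'q hpn.le (by rw [hδ1', hpn, one_pow])
end

section
/- Let F be a real quadratic field, i.e. a totally real number field of degree 2 over ℚ. Let F^{+,×} denote the multiplicative group of totally positive elements of F (those x ∈ F^× with σ(x) > 0 for both real embeddings σ : F → ℝ), let ℚ^{+,×} denote the group of positive rational numbers, and let (F^×)² denote the group of squares in F^×. Then the quotient group F^{+,×} / (ℚ^{+,×}·(F^×)²) is infinite. -/
/-!
The norm `N = Algebra.norm ℚ` sends `ℚ^{+,×}·(F^×)²` into the squares of `ℚ^×`, because `N r = r²`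
for rational `r`. So two totally positive elements in the same class have norms that differ by a
rational square.

Write `F = ℚ ⊕ ℚ δ` with `δ² = D` a positive integer (`exists_sqrt`). For an integer `n > √D` the
element `n + δ` is totally positive, of norm `n² - D` (`norm_int_add`). If the quotient were finite,
only finitely many primes could divide a numerator or denominator of the norms of chosen
representatives; yet, avoiding those primes, `exists_prime` finds `p` and `n > √D` such that `p`
divides `n² - D` exactly once. The `p`-adic valuation of `N (n + δ)` is then odd, whereas that of
the representative's norm is `0`, so the two norms do not differ by a square.
-/

/-- The subgroup of totally positive elements of `F^×`. -/
def totallyPositiveUnits (F : Type*) [Field F] : Subgroup Fˣ where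
  carrier := {x : Fˣ | ∀ σ : F →+* ℝ, 0 < σ (x : F)}
  one_mem' := by
    intro σ
    simp
  mul_mem' := by
    intro a b ha hb σ
    rw [Units.val_mul, map_mul]
    exact mul_pos (ha σ) (hb σ)
  inv_mem' := by
    intro a ha σ
    rw [Units.val_inv_eq_inv_val, map_inv₀]
    exact inv_pos.mpr (ha σ)

/-- The subgroup `ℚ^{+,×}·(F^×)²` of `F^×`, generated by the positive rational numbers
and the squares. -/
def posRatTimesSquares (F : Type*) [Field F] : Subgroup Fˣ :=
  Subgroup.closure
    {x : Fˣ | (∃ r : ℚ, 0 < r ∧ (x : F) = (r : F)) ∨ ∃ y : Fˣ, x = y * y}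

/-- The prime `p` is any prime factor of `D M² - 1`; it divides `n² - D` for `n = D M` and is coprime
to `2 D M`. If even `p²` divides `n² - D`, replacing `n` by `n + p` makes `p` divide it exactly
once. -/
lemma exists_prime (D M : ℤ) (hD : 0 < D) (hM : 2 ≤ M) (hev : 2 ∣ M) :
    ∃ (p : ℕ) (n : ℤ), p.Prime ∧ ¬ (p : ℤ) ∣ M ∧ 0 < n ∧ D < n ^ 2 ∧
      (p : ℤ) ∣ n ^ 2 - D ∧ ¬ (p : ℤ) ^ 2 ∣ n ^ 2 - D := by
  have hbig : 1 < D * M ^ 2 - 1 := by nlinarith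
  obtain ⟨p, hp, hpd⟩ := Int.exists_prime_and_dvd (n := D * M ^ 2 - 1) (by omega)
  -- The prime may be taken to be a natural number.
  have hq : p.natAbs.Prime := Int.prime_iff_natAbs_prime.mp hp
  have hqd : (p.natAbs : ℤ) ∣ D * M ^ 2 - 1 := Int.natAbs_dvd.mpr hpd
  generalize p.natAbs = q at hq hqd
  have hqp : Prime (q : ℤ) := Nat.prime_iff_prime_int.mp hq
  have hunit : ¬ (q : ℤ) ∣ 1 := fun h => hqp.not_isUnit (isUnit_of_dvd_one h)
  have hqDM : ¬ (q : ℤ) ∣ D * M := fun h => hunit <| by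
    have h2 : (q : ℤ) ∣ D * M * M := h.mul_right _
    have := dvd_sub h2 hqd
    ring_nf at this
    simpa using this
  have hqM : ¬ (q : ℤ) ∣ M := fun h => hqDM (h.mul_left _)
  have hq2 : ¬ (q : ℤ) ∣ 2 := fun h => hqM (h.trans hev)
  have hdvd : (q : ℤ) ∣ (D * M) ^ 2 - D := by
    have := hqd.mul_left D
    ring_nf at this ⊢
    exact this
  have hq0 : (0 : ℤ) < q := by exact_mod_cast hq.pos
  have hn : 0 < D * M := by positivity
  have hDn : D < (D * M) ^ 2 := by nlinarith
  by_cases hsq : (q : ℤ) ^ 2 ∣ (D * M) ^ 2 - D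
  · refine ⟨q, D * M + q, hq, hqM, by positivity, by nlinarith, ?_, ?_⟩
    · have := dvd_add hdvd (Dvd.intro (2 * (D * M) + q) rfl : (q : ℤ) ∣ q * (2 * (D * M) + q))
      ring_nf at this ⊢
      exact this
    · intro h
      have h1 := dvd_sub (dvd_sub h hsq) (dvd_refl ((q : ℤ) ^ 2))
      have h2 : (q : ℤ) * q ∣ q * (2 * (D * M)) := by
        ring_nf at h1 ⊢
        exact h1
      rcases hqp.dvd_or_dvd (Int.dvd_of_mul_dvd_mul_left hq0.ne' h2) with h | h
      · exact hq2 h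
      · exact hqDM h
  · exact ⟨q, D * M, hq, hqM, hn, hDn, hdvd, hsq⟩

lemma linInd_one {F : Type*} [Field F] [NumberField F] (x : F)
    (hx : x ∉ (algebraMap ℚ F).range) : LinearIndependent ℚ ![(1 : F), x] := by
  rw [LinearIndependent.pair_iff]
  intro s t h
  have ht : t = 0 := by
    by_contra ht
    apply hx
    refine ⟨-s / t, ?_⟩
    have ht' : algebraMap ℚ F t ≠ 0 := by simpa using ht
    rw [map_div₀, map_neg, div_eq_iff ht']
    simp only [Algebra.smul_def, mul_one] at h
    linear_combination -h
  subst ht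
  simpa using h

/-- A real quadratic field is generated by the square root of a positive integer. -/
lemma exists_sqrt (F : Type*) [Field F] [NumberField F]
    (htotreal : ∀ (σ : F →+* ℂ) (x : F), (σ x).im = 0)
    (hquad : Module.finrank ℚ F = 2) :
    ∃ (δ : F) (D : ℤ), 0 < D ∧ δ ^ 2 = (D : F) ∧ δ ∉ (algebraMap ℚ F).range := by
  obtain ⟨x, hx⟩ : ∃ x : F, x ∉ (algebraMap ℚ F).range := by
    by_contra! h
    have h1 : Function.Surjective (Algebra.linearMap ℚ F) := fun y => h y
    have := LinearMap.finrank_le_finrank_of_surjective h1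
    simp [hquad] at this
  let b := basisOfLinearIndependentOfCardEqFinrank (linInd_one x hx) (by simp [hquad])
  have hs := b.sum_repr (x * x)
  simp only [b, Fin.sum_univ_two, coe_basisOfLinearIndependentOfCardEqFinrank,
    Matrix.cons_val_zero, Matrix.cons_val_one, Algebra.smul_def, mul_one] at hs
  set u := (basisOfLinearIndependentOfCardEqFinrank (linInd_one x hx)
    (by simp [hquad])).repr (x * x) 0
  set v := (basisOfLinearIndependentOfCardEqFinrank (linInd_one x hx)
    (by simp [hquad])).repr (x * x) 1
  -- Complete the square in `x² = u + v x`, then clear the denominator of the discriminant `r`.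
  set r : ℚ := v ^ 2 + 4 * u with hr
  have hden : (r.den : F) ≠ 0 := by exact_mod_cast r.den_ne_zero
  have hδr : (2 * x - algebraMap ℚ F v) ^ 2 = algebraMap ℚ F r := by
    rw [hr, map_add, map_mul, map_pow]
    simp only [map_ofNat]
    linear_combination -4 * hs
  have hrd : algebraMap ℚ F r * r.den = r.num := by
    have := congrArg (algebraMap ℚ F) (Rat.mul_den_eq_num r)
    rwa [map_mul, map_natCast, map_intCast] at this
  have hsq : ((r.den : F) * (2 * x - algebraMap ℚ F v)) ^ 2 = ((r.num * r.den : ℤ) : F) := by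
    push_cast
    rw [mul_pow, hδr, ← hrd]
    ring
  have hnot : (r.den : F) * (2 * x - algebraMap ℚ F v) ∉ (algebraMap ℚ F).range := by
    rintro ⟨s, hs'⟩
    apply hx
    refine ⟨(s / r.den + v) / 2, ?_⟩
    simp only [map_div₀, map_add, map_natCast, map_ofNat]
    rw [hs']
    field_simp
    ring
  refine ⟨_, r.num * r.den, ?_, hsq, hnot⟩
  generalize r.num * (r.den : ℤ) = D at hsq
  generalize (r.den : F) * (2 * x - algebraMap ℚ F v) = δ at hsq hnot
  let σ : F →+* ℂ := Classical.arbitrary _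
  have hδ0 : σ δ ≠ 0 := by
    rw [map_ne_zero]
    rintro rfl
    exact hnot (zero_mem _)
  have him := htotreal σ δ
  have hre : (σ δ).re ≠ 0 := fun h => hδ0 (Complex.ext h him)
  have h := congrArg (fun z => (σ z).re) hsq
  simp only [sq, map_mul, map_intCast, Complex.intCast_re, Complex.mul_re, him] at h
  have : (0 : ℝ) < D := by
    rw [← h]
    have := mul_self_pos.mpr hre
    linarith
  exact_mod_cast this

lemma norm_int_add {F : Type*} [Field F] [NumberField F] (hquad : Module.finrank ℚ F = 2)
    (δ : F) (D n : ℤ) (hδ : δ ^ 2 = (D : F)) (hnot : δ ∉ (algebraMap ℚ F).range) :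
    Algebra.norm ℚ ((n : F) + δ) = ((n ^ 2 - D : ℤ) : ℚ) := by
  obtain ⟨b, hb⟩ : ∃ b : Module.Basis (Fin 2) ℚ F, ⇑b = ![1, δ] :=
    ⟨basisOfLinearIndependentOfCardEqFinrank (linInd_one δ hnot) (by simp [hquad]), by simp⟩
  have hb0 : b 0 = 1 := by simp [hb]
  have hb1 : b 1 = δ := by simp [hb]
  have h0 : ((n : F) + δ) * b 0 = (n : ℚ) • b 0 + (1 : ℚ) • b 1 := by
    simp [hb0, hb1, Algebra.smul_def]
  have h1 : ((n : F) + δ) * b 1 = (D : ℚ) • b 0 + (n : ℚ) • b 1 := by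
    simp only [hb0, hb1, Algebra.smul_def, map_intCast]
    linear_combination hδ
  rw [Algebra.norm_eq_matrix_det b, Matrix.det_fin_two]
  simp only [Algebra.leftMulMatrix_eq_repr_mul, h0, h1, map_add, map_smul, b.repr_self,
    Finsupp.add_apply, Finsupp.smul_apply, Finsupp.single_apply]
  simp
  ring

lemma isSquare_norm {F : Type*} [Field F] [NumberField F] (hquad : Module.finrank ℚ F = 2)
    (x : Fˣ) (hx : x ∈ posRatTimesSquares F) : IsSquare (Algebra.norm ℚ (x : F)) := by
  induction hx using Subgroup.closure_induction with
  | mem x hx =>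
    rcases hx with ⟨r, -, hr⟩ | ⟨y, rfl⟩
    · have : (x : F) = algebraMap ℚ F r := by rw [hr, eq_ratCast]
      rw [this, Algebra.norm_algebraMap, hquad]
      exact ⟨r, sq r⟩
    · exact ⟨Algebra.norm ℚ (y : F), by simp⟩
  | one => simp
  | mul x y _ _ hx hy => simpa using hx.mul hy
  | inv x _ hx =>
    have h : Algebra.norm ℚ (x : F) * Algebra.norm ℚ ((x⁻¹ : Fˣ) : F) = 1 := by
      rw [← map_mul, Units.mul_inv, map_one]
    rw [eq_inv_of_mul_eq_one_right h]
    exact hx.inv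

/-- **For a real quadratic field `F`, the quotient `F^{+,×} / (ℚ^{+,×}·(F^×)²)` is
infinite.** -/
theorem totally_positive_mod_rat_squares_infinite
    (F : Type*) [Field F] [NumberField F]
    (htotreal : ∀ (σ : F →+* ℂ) (x : F), (σ x).im = 0)
    (hquad : Module.finrank ℚ F = 2) :
    Infinite (totallyPositiveUnits F ⧸
      (posRatTimesSquares F).subgroupOf (totallyPositiveUnits F)) := by
  by_contra hfin
  rw [not_infinite_iff_finite] at hfin
  obtain ⟨δ, D, hD, hδ, hnot⟩ := exists_sqrt F htotreal hquad
  have := Fintype.ofFinite (totallyPositiveUnits F ⧸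
    (posRatTimesSquares F).subgroupOf (totallyPositiveUnits F))
  let c : (totallyPositiveUnits F ⧸
    (posRatTimesSquares F).subgroupOf (totallyPositiveUnits F)) → ℚ :=
    fun q => Algebra.norm ℚ ((q.out : Fˣ) : F)
  have hc : ∀ q, c q ≠ 0 := fun q => by simp [c]
  let P : ℕ := ∏ q, (c q).num.natAbs * (c q).den
  have hP : 0 < P := Finset.prod_pos fun q _ =>
    Nat.mul_pos (Int.natAbs_pos.mpr (Rat.num_ne_zero.mpr (hc q))) (c q).den_pos
  obtain ⟨p, n, hp, hpM, hn, hDn, hdvd, hndvd⟩ :=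
    exists_prime D (2 * (P : ℤ)) hD (by omega) (Dvd.intro _ rfl)
  have : Fact p.Prime := ⟨hp⟩
  have hpc : ∀ q, padicValRat p (c q) = 0 := by
    intro q
    have h1 : (c q).num.natAbs * (c q).den ∣ P := Finset.dvd_prod_of_mem _ (Finset.mem_univ q)
    have h2 : ¬ p ∣ P := fun h => hpM ((Int.natCast_dvd_natCast.mpr h).mul_left _)
    have h3 : ¬ p ∣ (c q).num.natAbs := fun h => h2 ((h.mul_right _).trans h1)
    have h4 : ¬ p ∣ (c q).den := fun h => h2 ((h.mul_left _).trans h1)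
    rw [padicValRat_def, padicValInt, padicValNat.eq_zero_of_not_dvd h3,
      padicValNat.eq_zero_of_not_dvd h4]
    simp
  have hpos : ∀ σ : F →+* ℝ, 0 < σ ((n : F) + δ) := by
    intro σ
    have h1 : (σ δ) ^ 2 = D := by rw [← map_pow, hδ, map_intCast]
    have h2 : (σ δ) ^ 2 < (n : ℝ) ^ 2 := by rw [h1]; exact_mod_cast hDn
    have h3 := (abs_lt_of_sq_lt_sq' h2 (by exact_mod_cast hn.le)).1
    rw [map_add, map_intCast]
    linarith
  have hne : (n : F) + δ ≠ 0 := by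
    intro h
    exact hnot ⟨-n, by rw [map_neg, map_intCast]; linear_combination -h⟩
  let α : totallyPositiveUnits F := ⟨Units.mk0 _ hne, hpos⟩
  let q : totallyPositiveUnits F ⧸
    (posRatTimesSquares F).subgroupOf (totallyPositiveUnits F) := QuotientGroup.mk α
  have hmem := QuotientGroup.eq.mp (QuotientGroup.out_eq' q)
  rw [Subgroup.mem_subgroupOf] at hmem
  obtain ⟨s, hs⟩ := isSquare_norm hquad _ hmem
  have hN : Algebra.norm ℚ ((α : Fˣ) : F) = ((n ^ 2 - D : ℤ) : ℚ) :=
    norm_int_add hquad δ D n hδ hnot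
  have hs' : ((n ^ 2 - D : ℤ) : ℚ) = c q * (s * s) := by
    rw [← hs, ← hN]
    simp only [c, ← map_mul]
    simp
  have hm0 : n ^ 2 - D ≠ 0 := by omega
  have hs0 : s ≠ 0 := by
    rintro rfl
    rw [mul_zero, mul_zero] at hs'
    exact hm0 (by exact_mod_cast hs')
  have hv := congrArg (padicValRat p) hs'
  rw [padicValRat.mul (hc q) (mul_ne_zero hs0 hs0), padicValRat.mul hs0 hs0, hpc,
    padicValRat.of_int] at hv
  have h1 : 1 ≤ padicValInt p (n ^ 2 - D) := by
    have := (padicValInt_dvd_iff 1 (n ^ 2 - D)).mp (by simpa using hdvd)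
    exact this.resolve_left hm0
  have h2 : ¬ 2 ≤ padicValInt p (n ^ 2 - D) := fun h =>
    hndvd ((padicValInt_dvd_iff 2 (n ^ 2 - D)).mpr (Or.inr h))
  omega
end
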